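/- Let (R,m) be a Cohen-Macaulay local ring of dimension d and let M be an R-module with dim_R(M) = d which is not maximal Cohen-Macaulay. If Gdim_R(λM) < ∞, then sup{ i : H^i_m(M) ≠ 0, i ≠ d } = d − rgr(M). -/

import Mathlib

open CategoryTheory

noncomputable section

universe u

/-- The `i`-th Ext group `Ext^i_R(M,N)`, as a type (with its `R`-module structure). -/
abbrev extM (R : Type u) [CommRing R] (i : ℕ) (M N : Type u) [AddCommGroup M] [Module R M]
    [AddCommGroup N] [Module R N] : Type u :=
  ((Ext R (ModuleCat.{u} R) i).obj (Opposite.op (ModuleCat.of R M))).obj (ModuleCat.of R N)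

/-- The `i`-th Tor group `Tor^R_i(M,N)`, as a type. -/
abbrev torM (R : Type u) [CommRing R] (i : ℕ) (M N : Type u) [AddCommGroup M] [Module R M]
    [AddCommGroup N] [Module R N] : Type u :=
  ((Tor (ModuleCat.{u} R) i).obj (ModuleCat.of R M)).obj (ModuleCat.of R N)

/-- The `i`-th local cohomology `H^i_I(M)`, as a type. -/
abbrev locCoh (R : Type u) [CommRing R] (I : Ideal R) (i : ℕ) (M : Type u) [AddCommGroup M]
    [Module R M] : Type u :=
  (localCohomology I i).obj (ModuleCat.of R M)

/-- A submodule `N ≤ M` is superfluous if `K ⊔ N = ⊤` implies `K = ⊤`. -/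
def Submodule.IsSuperfluous {R M : Type u} [CommRing R] [AddCommGroup M] [Module R M]
    (N : Submodule R M) : Prop :=
  ∀ K : Submodule R M, K ⊔ N = ⊤ → K = ⊤

/-- A minimal projective resolution of `M` by finitely generated projective modules:
each `P i → Ω^i M` is a projective cover (i.e. has superfluous kernel). -/
structure MinRes (R : Type u) [CommRing R] (M : Type u) [AddCommGroup M] [Module R M] where
  P : ℕ → ModuleCat.{u} R
  projective : ∀ i, Module.Projective R (P i)
  finite : ∀ i, Module.Finite R (P i)
  d : (i : ℕ) → (↥(P (i + 1)) →ₗ[R] ↥(P i))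
  ε : ↥(P 0) →ₗ[R] M
  surj : Function.Surjective ε
  exact0 : LinearMap.range (d 0) = LinearMap.ker ε
  exact : ∀ i, LinearMap.range (d (i + 1)) = LinearMap.ker (d i)
  min_eps : (LinearMap.ker ε).IsSuperfluous
  min_d : ∀ i, (LinearMap.ker (d i)).IsSuperfluous

namespace MinRes

variable {R M : Type u} [CommRing R] [AddCommGroup M] [Module R M]

/-- `T k F` is the Auslander-Bridger transpose `𝒯_{k+1} M = Tr Ω^k M`, computed as the
cokernel of `P_k* → P_{k+1}*`. -/
def T (F : MinRes R M) (k : ℕ) : Type u :=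
  (Module.Dual R ↥(F.P (k + 1))) ⧸ LinearMap.range (F.d k).dualMap

instance (F : MinRes R M) (k : ℕ) : AddCommGroup (F.T k) :=
  inferInstanceAs (AddCommGroup ((Module.Dual R ↥(F.P (k + 1))) ⧸
    LinearMap.range (F.d k).dualMap))

instance (F : MinRes R M) (k : ℕ) : Module R (F.T k) :=
  inferInstanceAs (Module R ((Module.Dual R ↥(F.P (k + 1))) ⧸
    LinearMap.range (F.d k).dualMap))

/-- The transpose `Tr M = coker(P₀* → P₁*)` computed from a minimal projective presentation. -/
abbrev Tr (F : MinRes R M) : Type u := F.T 0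

/-- `λM = ΩTr M`, realized as the image of `P₀* → P₁*` for a minimal projective
presentation `P₁ → P₀ → M → 0`. -/
def lambdaMod (F : MinRes R M) : Type u :=
  ↥(LinearMap.range (F.d 0).dualMap)

instance (F : MinRes R M) : AddCommGroup F.lambdaMod :=
  inferInstanceAs (AddCommGroup ↥(LinearMap.range (F.d 0).dualMap))

instance (F : MinRes R M) : Module R F.lambdaMod :=
  inferInstanceAs (Module R ↥(LinearMap.range (F.d 0).dualMap))

end MinRes

/-- `M` is a horizontally linked `R`-module, i.e. `M ≅ λλM`. -/
def IsHorizontallyLinked (R : Type u) [CommRing R] (M : Type u) [AddCommGroup M]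
    [Module R M] : Prop :=
  ∃ (F : MinRes R M) (G : MinRes R F.lambdaMod), Nonempty (G.lambdaMod ≃ₗ[R] M)

/-- `M` and `N` are horizontally linked to each other: `M ≅ λN` and `N ≅ λM`. -/
def MutuallyLinked (A : Type u) [CommRing A] (M N : Type u) [AddCommGroup M] [Module A M]
    [AddCommGroup N] [Module A N] : Prop :=
  ∃ (F : MinRes A M) (G : MinRes A N),
    Nonempty (F.lambdaMod ≃ₗ[A] N) ∧ Nonempty (G.lambdaMod ≃ₗ[A] M)

/-- `M` is linked to `N` by the ideal `c`: `c` annihilates both modules and they are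
horizontally linked to each other as `R ⧸ c`-modules. -/
def LinkedBy (R : Type u) [CommRing R] (c : Ideal R) (M N : Type u) [AddCommGroup M]
    [Module R M] [AddCommGroup N] [Module R N] : Prop :=
  ∃ (hM : Module.IsTorsionBySet R M c) (hN : Module.IsTorsionBySet R N c),
    letI := hM.module
    letI := hN.module
    MutuallyLinked (R ⧸ c) M N

/-- A stable module: no nonzero projective direct summand. -/
def IsStableModule (R : Type u) [CommRing R] (M : Type u) [AddCommGroup M] [Module R M] : Prop :=
  ∀ N : Submodule R M, Module.Projective R ↥N → (∃ N' : Submodule R M, IsCompl N N') → N = ⊥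

/-- `M` has G-dimension zero: `M` is finitely generated and reflexive,
and `Ext^i(M,R) = 0 = Ext^i(M*,R)` for all `i > 0`. -/
def IsGDimZero (R : Type u) [CommRing R] (M : Type u) [AddCommGroup M] [Module R M] : Prop :=
  Module.Finite R M ∧ Function.Bijective (Module.Dual.eval R M) ∧
    (∀ i : ℕ, 0 < i → Subsingleton (extM R i M R)) ∧
    (∀ i : ℕ, 0 < i → Subsingleton (extM R i (Module.Dual R M) R))

/-- `M` admits a resolution of length `≤ n` by modules of G-dimension zero. -/
def GDimLE (R : Type u) [CommRing R] : ℕ → ModuleCat.{u} R → Prop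
  | 0, M => IsGDimZero R ↥M
  | n + 1, M =>
    ∃ (G : ModuleCat.{u} R) (f : ↥G →ₗ[R] ↥M), IsGDimZero R ↥G ∧ Function.Surjective f ∧
      GDimLE R n (ModuleCat.of R ↥(LinearMap.ker f))

/-- The G-dimension of `M`: the minimal length of a resolution of `M` by modules of
G-dimension zero (`∞` if there is none). -/
def GDim (R : Type u) [CommRing R] (M : Type u) [AddCommGroup M] [Module R M] : ℕ∞ :=
  sInf {n : ℕ∞ | ∃ k : ℕ, n = k ∧ GDimLE R k (ModuleCat.of R M)}

/-- The reduced grade of `M`: `rgr M = inf{ i > 0 | Ext^i(M,R) ≠ 0 }`. -/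
def rgr (R : Type u) [CommRing R] (M : Type u) [AddCommGroup M] [Module R M] : ℕ∞ :=
  sInf {n : ℕ∞ | ∃ k : ℕ, n = k ∧ 0 < k ∧ ¬ Subsingleton (extM R k M R)}

/-- The grade of `M`: `gr M = inf{ i ≥ 0 | Ext^i(M,R) ≠ 0 }`. -/
def egrade (R : Type u) [CommRing R] (M : Type u) [AddCommGroup M] [Module R M] : ℕ∞ :=
  sInf {n : ℕ∞ | ∃ k : ℕ, n = k ∧ ¬ Subsingleton (extM R k M R)}

/-- `depth_I(M) = inf{ i | Ext^i(R/I, M) ≠ 0 }`; for `I` the maximal ideal of a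
local ring this is the depth of `M`. -/
def edepth (R : Type u) [CommRing R] (I : Ideal R) (M : Type u) [AddCommGroup M]
    [Module R M] : ℕ∞ :=
  sInf {n : ℕ∞ | ∃ k : ℕ, n = k ∧ ¬ Subsingleton (extM R k (R ⧸ I) M)}

/-- The depth of the local ring `R`. -/
def rdepth (R : Type u) [CommRing R] [IsLocalRing R] : ℕ∞ :=
  edepth R (IsLocalRing.maximalIdeal R) R

/-- `depth_{R_p}(M_p)`. -/
def locDepth (R : Type u) [CommRing R] (p : Ideal R) [p.IsPrime] (M : Type u) [AddCommGroup M]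
    [Module R M] : ℕ∞ :=
  edepth (Localization.AtPrime p) (IsLocalRing.maximalIdeal (Localization.AtPrime p))
    (LocalizedModule p.primeCompl M)

/-- `depth R_p`. -/
def locRingDepth (R : Type u) [CommRing R] (p : Ideal R) [p.IsPrime] : ℕ∞ :=
  rdepth (Localization.AtPrime p)

/-- `Gdim_{R_p}(M_p)`. -/
def locGDim (R : Type u) [CommRing R] (p : Ideal R) [p.IsPrime] (M : Type u) [AddCommGroup M]
    [Module R M] : ℕ∞ :=
  GDim (Localization.AtPrime p) (LocalizedModule p.primeCompl M)

/-- `rgr_{R_p}(M_p)`. -/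
def locRgr (R : Type u) [CommRing R] (p : Ideal R) [p.IsPrime] (M : Type u) [AddCommGroup M]
    [Module R M] : ℕ∞ :=
  rgr (Localization.AtPrime p) (LocalizedModule p.primeCompl M)

/-- `dim_{R_p}(M_p)`, the Krull dimension of the support of `M_p` over `R_p`. -/
def locDim (R : Type u) [CommRing R] (p : Ideal R) [p.IsPrime] (M : Type u) [AddCommGroup M]
    [Module R M] : WithBot ℕ∞ :=
  ringKrullDim ((Localization.AtPrime p) ⧸
    Module.annihilator (Localization.AtPrime p) (LocalizedModule p.primeCompl M))

/-- `M` satisfies the condition `S̃_k`: `depth_{R_p}(M_p) ≥ min{k, depth R_p}` for all primes. -/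
def Stilde (R : Type u) [CommRing R] (k : ℕ) (M : Type u) [AddCommGroup M] [Module R M] : Prop :=
  ∀ (p : Ideal R) (_ : p.IsPrime), min (k : ℕ∞) (locRingDepth R p) ≤ locDepth R p M

/-- `M` satisfies Serre's condition `(S_k)`:
`depth_{R_p}(M_p) ≥ min{k, dim_{R_p}(M_p)}` for all primes. -/
def SerreS (R : Type u) [CommRing R] (k : ℕ) (M : Type u) [AddCommGroup M] [Module R M] : Prop :=
  ∀ (p : Ideal R) (_ : p.IsPrime),
    min (k : WithBot ℕ∞) (locDim R p M) ≤ (locDepth R p M : WithBot ℕ∞)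

/-- `M` is a `k`-th syzygy module. -/
def IsKthSyzygy (R : Type u) [CommRing R] : ℕ → ModuleCat.{u} R → Prop
  | 0, _ => True
  | k + 1, M =>
    ∃ (P : ModuleCat.{u} R) (f : ↥M →ₗ[R] ↥P), Module.Projective R ↥P ∧ Module.Finite R ↥P ∧
      Function.Injective f ∧ IsKthSyzygy R k (ModuleCat.of R (↥P ⧸ LinearMap.range f))

/-- The `I`-torsion submodule `Γ_I(M) = { x | I^n x = 0 for some n }`. -/
def gammaTorsion (R : Type u) [CommRing R] (I : Ideal R) (M : Type u) [AddCommGroup M]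
    [Module R M] : Submodule R M where
  carrier := {x | ∃ n : ℕ, ∀ a ∈ I ^ n, a • x = 0}
  zero_mem' := ⟨0, fun a _ => smul_zero a⟩
  add_mem' := by
    rintro x y ⟨n, hn⟩ ⟨m, hm⟩
    exact ⟨n + m, fun a ha => by
      rw [smul_add, hn a (Ideal.pow_le_pow_right (Nat.le_add_right n m) ha),
        hm a (Ideal.pow_le_pow_right (Nat.le_add_left m n) ha), add_zero]⟩
  smul_mem' := by
    rintro c x ⟨n, hn⟩
    exact ⟨n, fun a ha => by rw [smul_comm, hn a ha, smul_zero]⟩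

/-- `N` has finite flat dimension (characterized by uniform vanishing of `Tor`). -/
def HasFiniteFlatDim (R : Type u) [CommRing R] (N : Type u) [AddCommGroup N] [Module R N] : Prop :=
  ∃ n : ℕ, ∀ i : ℕ, n < i → ∀ (M : ModuleCat.{u} R), Subsingleton (torM R i ↥M N)

/-- `N` has finite injective dimension (characterized by uniform vanishing of `Ext`). -/
def HasFiniteInjDim (R : Type u) [CommRing R] (N : Type u) [AddCommGroup N] [Module R N] : Prop :=
  ∃ n : ℕ, ∀ i : ℕ, n < i → ∀ (M : ModuleCat.{u} R), Subsingleton (extM R i ↥M N)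

/-- `K` is a semidualizing `R`-module. -/
def IsSemidualizing (R : Type u) [CommRing R] (K : Type u) [AddCommGroup K] [Module R K] : Prop :=
  Module.Finite R K ∧ Function.Bijective (LinearMap.lsmul R K) ∧
    ∀ i : ℕ, 0 < i → Subsingleton (extM R i K K)

/-- The biduality map `M → Hom(Hom(M,K),K)`. -/
def evalK (R : Type u) [CommRing R] (K M : Type u) [AddCommGroup K] [Module R K]
    [AddCommGroup M] [Module R M] : M →ₗ[R] ((M →ₗ[R] K) →ₗ[R] K) :=
  LinearMap.applyₗ

/-- `M` has `G_K`-dimension zero. -/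
def IsGKDimZero (R : Type u) [CommRing R] (K M : Type u) [AddCommGroup K] [Module R K]
    [AddCommGroup M] [Module R M] : Prop :=
  Module.Finite R M ∧ Function.Bijective (evalK R K M) ∧
    (∀ i : ℕ, 0 < i → Subsingleton (extM R i M K)) ∧
    (∀ i : ℕ, 0 < i → Subsingleton (extM R i (M →ₗ[R] K) K))

/-- `M` admits a resolution of length `≤ n` by modules of `G_K`-dimension zero. -/
def GKDimLE (R : Type u) [CommRing R] (K : Type u) [AddCommGroup K] [Module R K] :
    ℕ → ModuleCat.{u} R → Prop
  | 0, M => IsGKDimZero R K ↥M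
  | n + 1, M =>
    ∃ (G : ModuleCat.{u} R) (f : ↥G →ₗ[R] ↥M), IsGKDimZero R K ↥G ∧ Function.Surjective f ∧
      GKDimLE R K n (ModuleCat.of R ↥(LinearMap.ker f))

/-- The `G_K`-dimension of `M`. -/
def GKDim (R : Type u) [CommRing R] (K M : Type u) [AddCommGroup K] [Module R K]
    [AddCommGroup M] [Module R M] : ℕ∞ :=
  sInf {n : ℕ∞ | ∃ k : ℕ, n = k ∧ GKDimLE R K k (ModuleCat.of R M)}

/-- The grade of a module, `gr_R(M) = grade(Ann_R(M), R) = inf{i | Ext^i(R/Ann M, R) ≠ 0}`. -/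
def grAnn (R : Type u) [CommRing R] (M : Type u) [AddCommGroup M] [Module R M] : ℕ∞ :=
  egrade R (R ⧸ Module.annihilator R M)

/-- The grade of an ideal, `grade(I) = inf{i | Ext^i(R/I, R) ≠ 0}`. -/
def gradeI (R : Type u) [CommRing R] (I : Ideal R) : ℕ∞ :=
  egrade R (R ⧸ I)

/-- The ideal `I` is `G_K`-Gorenstein: `R/I` is `G_K`-perfect and `Ext^{gr I}(R/I, K)` is
cyclic. -/
def IsGKGorensteinIdeal (R : Type u) [CommRing R] (K : Type u) [AddCommGroup K] [Module R K]
    (I : Ideal R) : Prop :=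
  ∃ n : ℕ, grAnn R (R ⧸ I) = (n : ℕ∞) ∧ GKDim R K (R ⧸ I) = (n : ℕ∞) ∧
    ∃ x : extM R n (R ⧸ I) K, Submodule.span R {x} = ⊤

end

open CategoryTheory Abelian
section PartW
variable {R : Type u} [CommRing R]

/-- Vanishing of `Ext`. -/
def EZ (R : Type u) [CommRing R] (i : ℕ) (M N : Type u) [AddCommGroup M] [Module R M]
    [AddCommGroup N] [Module R N] : Prop :=
  Subsingleton (Abelian.Ext.{u} (ModuleCat.of R M) (ModuleCat.of R N) i)

variable {A B C N X : Type u} [AddCommGroup A] [Module R A] [AddCommGroup B] [Module R B]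
  [AddCommGroup C] [Module R C] [AddCommGroup N] [Module R N] [AddCommGroup X] [Module R X]

theorem EZ.eq_zero {i : ℕ} (h : EZ R i A B)
    (x : Abelian.Ext.{u} (ModuleCat.of R A) (ModuleCat.of R B) i) : x = 0 :=
  h.elim x 0

theorem EZ.of_zero {i : ℕ}
    (h : ∀ x : Abelian.Ext.{u} (ModuleCat.of R A) (ModuleCat.of R B) i, x = 0) : EZ R i A B :=
  ⟨fun a b => (h a).trans (h b).symm⟩

/-- The short complex. -/
abbrev sc (f : A →ₗ[R] B) (g : B →ₗ[R] C) (hfg : Function.Exact f g) :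
    ShortComplex (ModuleCat.{u} R) :=
  ModuleCat.shortComplexOfCompEqZero f g hfg.linearMap_comp_eq_zero

theorem sc_se (f : A →ₗ[R] B) (g : B →ₗ[R] C) (hf : Function.Injective f)
    (hfg : Function.Exact f g) (hg : Function.Surjective g) : (sc f g hfg).ShortExact :=
  ModuleCat.shortComplex_shortExact _ hfg hf hg

theorem EZ.proj (i : ℕ) [Module.Projective R A] : EZ R (i+1) A B := by
  refine EZ.of_zero fun x => ?_
  have : Projective (ModuleCat.of R A) := (IsProjective.iff_projective A).1 inferInstance
  exact Ext.eq_zero_of_projective x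

theorem EZ.proj' {i : ℕ} (hi : 0 < i) [Module.Projective R A] : EZ R i A B := by
  obtain ⟨j, rfl⟩ : ∃ j, i = j + 1 := ⟨i - 1, by omega⟩
  exact EZ.proj j

theorem EZ.inj (i : ℕ) (hB : Injective (ModuleCat.of R B)) : EZ R (i+1) A B := by
  refine EZ.of_zero fun x => ?_
  exact Ext.eq_zero_of_injective x

theorem EZ.zero_iff : EZ R 0 A B ↔ ∀ f : A →ₗ[R] B, f = 0 := by
  constructor
  · intro h f
    have := h.eq_zero (Ext.mk₀ (ModuleCat.ofHom f))
    rw [Ext.mk₀_eq_zero_iff] at this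
    have := congrArg ModuleCat.Hom.hom this
    simpa using this
  · intro h
    refine EZ.of_zero fun x => ?_
    obtain ⟨f, rfl⟩ := (Ext.mk₀_bijective _ _).2 x
    rw [Ext.mk₀_eq_zero_iff]
    ext1
    exact h _

section ses
variable (f : A →ₗ[R] B) (g : B →ₗ[R] C) (hf : Function.Injective f)
    (hfg : Function.Exact f g) (hg : Function.Surjective g)
include hf hfg hg

theorem EZ.contra2 {i : ℕ} (h1 : EZ R i C N) (h2 : EZ R i A N) : EZ R i B N := by
  refine EZ.of_zero fun x => ?_
  obtain ⟨y, hy⟩ := Ext.contravariant_sequence_exact₂ (sc_se f g hf hfg hg) _ x (h2.eq_zero _)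
  rw [← hy, h1.eq_zero y, Ext.comp_zero]

theorem EZ.contra1 {i : ℕ} (h1 : EZ R i B N) (h2 : EZ R (i+1) C N) : EZ R i A N := by
  refine EZ.of_zero fun x => ?_
  obtain ⟨y, hy⟩ := Ext.contravariant_sequence_exact₁ (sc_se f g hf hfg hg) _ x
    (add_comm 1 i) (h2.eq_zero _)
  rw [← hy, h1.eq_zero y, Ext.comp_zero]

theorem EZ.contra3 {i : ℕ} (h1 : EZ R i A N) (h2 : EZ R (i+1) B N) : EZ R (i+1) C N := by
  refine EZ.of_zero fun x => ?_
  obtain ⟨y, hy⟩ := Ext.contravariant_sequence_exact₃ (sc_se f g hf hfg hg) _ x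
     (h2.eq_zero _) (add_comm 1 i)
  rw [← hy, h1.eq_zero y, Ext.comp_zero]

theorem EZ.cov2 {i : ℕ} (h1 : EZ R i X A) (h2 : EZ R i X C) : EZ R i X B := by
  refine EZ.of_zero fun x => ?_
  obtain ⟨y, hy⟩ := Ext.covariant_sequence_exact₂ _ (sc_se f g hf hfg hg) x (h2.eq_zero _)
  rw [← hy, h1.eq_zero y, Ext.zero_comp]

theorem EZ.cov1 {i : ℕ} (h1 : EZ R i X C) (h2 : EZ R (i+1) X B) : EZ R (i+1) X A := by
  refine EZ.of_zero fun x => ?_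
  obtain ⟨y, hy⟩ := Ext.covariant_sequence_exact₁ _ (sc_se f g hf hfg hg) x (h2.eq_zero _) rfl
  rw [← hy, h1.eq_zero y, Ext.zero_comp]

theorem EZ.cov3 {i : ℕ} (h1 : EZ R i X B) (h2 : EZ R (i+1) X A) : EZ R i X C := by
  refine EZ.of_zero fun x => ?_
  obtain ⟨y, hy⟩ := Ext.covariant_sequence_exact₃ _ (sc_se f g hf hfg hg) x rfl (h2.eq_zero _)
  rw [← hy, h1.eq_zero y, Ext.zero_comp]

theorem EZ.extend (h : EZ R 1 C N) (φ : A →ₗ[R] N) : ∃ ψ : B →ₗ[R] N, ψ ∘ₗ f = φ := by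
  obtain ⟨y, hy⟩ := Ext.contravariant_sequence_exact₁ (sc_se f g hf hfg hg) _
    (Ext.mk₀ (ModuleCat.ofHom φ)) (add_comm 1 0) (h.eq_zero _)
  obtain ⟨ψ, rfl⟩ := (Ext.mk₀_bijective _ _).2 y
  rw [Ext.mk₀_comp_mk₀] at hy
  have := (Ext.mk₀_bijective _ _).1 hy
  refine ⟨ψ.hom, ?_⟩
  have := congrArg ModuleCat.Hom.hom this
  simpa using this

theorem EZ.lift (h : EZ R 1 X A) (φ : X →ₗ[R] C) : ∃ ψ : X →ₗ[R] B, g ∘ₗ ψ = φ := by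
  obtain ⟨y, hy⟩ := Ext.covariant_sequence_exact₃ _ (sc_se f g hf hfg hg)
    (Ext.mk₀ (ModuleCat.ofHom φ)) rfl (h.eq_zero _)
  obtain ⟨ψ, rfl⟩ := (Ext.mk₀_bijective _ _).2 y
  rw [Ext.mk₀_comp_mk₀] at hy
  have := (Ext.mk₀_bijective _ _).1 hy
  refine ⟨ψ.hom, ?_⟩
  have := congrArg ModuleCat.Hom.hom this
  simpa using this

theorem EZ.of_extend (h : ∀ φ : A →ₗ[R] N, ∃ ψ : B →ₗ[R] N, ψ ∘ₗ f = φ) (hB : EZ R 1 B N) :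
    EZ R 1 C N := by
  refine EZ.of_zero fun x => ?_
  obtain ⟨y, hy⟩ := Ext.contravariant_sequence_exact₃ (sc_se f g hf hfg hg) _ x
     (hB.eq_zero _) (add_comm 1 0)
  obtain ⟨φ, rfl⟩ := (Ext.mk₀_bijective _ _).2 y
  obtain ⟨ψ, hψ⟩ := h φ.hom
  have : φ = (sc f g hfg).f ≫ ModuleCat.ofHom ψ := by
    ext1
    rw [← hψ]; rfl
  rw [← hy, this, ← Ext.mk₀_comp_mk₀, ← Ext.comp_assoc (h₁₂ := rfl) (h₂₃ := rfl) (h := rfl),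
    ShortComplex.ShortExact.extClass_comp, Ext.zero_comp]
end ses

theorem EZ.iso {i : ℕ} (e : A ≃ₗ[R] B) (h : EZ R i A N) : EZ R i B N := by
  refine EZ.of_zero fun x => ?_
  have : x = (Ext.mk₀ (ModuleCat.ofHom (e.symm : B →ₗ[R] A))).comp
    ((Ext.mk₀ (ModuleCat.ofHom (e : A →ₗ[R] B))).comp x (zero_add i)) (zero_add i) := by
    rw [← Ext.comp_assoc (h₁₂ := add_zero 0) (h₂₃ := zero_add i) (h := by simp),
      Ext.mk₀_comp_mk₀, ← ModuleCat.ofHom_comp]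
    simp
  rw [this, h.eq_zero ((Ext.mk₀ (ModuleCat.ofHom (e : A →ₗ[R] B))).comp x (zero_add i)),
    Ext.comp_zero]

theorem EZ.iso' {i : ℕ} (e : A ≃ₗ[R] B) (h : EZ R i N A) : EZ R i N B := by
  refine EZ.of_zero fun x => ?_
  have : x = (x.comp (Ext.mk₀ (ModuleCat.ofHom (e.symm : B →ₗ[R] A))) (add_zero i)).comp
    (Ext.mk₀ (ModuleCat.ofHom (e : A →ₗ[R] B))) (add_zero i) := by
    rw [Ext.comp_assoc (h₁₂ := add_zero i) (h₂₃ := zero_add 0) (h := by simp),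
      Ext.mk₀_comp_mk₀, ← ModuleCat.ofHom_comp]
    simp
  rw [this, h.eq_zero (x.comp (Ext.mk₀ (ModuleCat.ofHom (e.symm : B →ₗ[R] A))) (add_zero i)),
    Ext.zero_comp]

end PartW

open CategoryTheory Abelian Limits
section PartA1

theorem homology_hom_surj {D : Type*} [Category* D] [Abelian D] (K : ChainComplex D ℕ) (n : ℕ)
    (I : D) [Injective I] (x : K.homology n ⟶ I) :
    ∃ (f : K.X n ⟶ I) (hf : K.d (n+1) n ≫ f = 0),
      x = K.homologyι n ≫ K.descOpcycles f (n+1) (by simp) hf := by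
  refine ⟨K.pOpcycles n ≫ Injective.factorThru x (K.homologyι n), by simp, ?_⟩
  have : K.descOpcycles (K.pOpcycles n ≫ Injective.factorThru x (K.homologyι n)) (n+1)
    (by simp) (by simp) = Injective.factorThru x (K.homologyι n) := by
    rw [← cancel_epi (K.pOpcycles n), HomologicalComplex.p_descOpcycles]
  rw [this, Injective.comp_factorThru]

theorem homology_hom_zero {D : Type*} [Category* D] [Abelian D] (K : ChainComplex D ℕ) (n : ℕ)
    (I : D) [Injective I] (f : K.X n ⟶ I) (hf : K.d (n+1) n ≫ f = 0) :
    K.homologyι n ≫ K.descOpcycles f (n+1) (by simp) hf = 0 ↔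
     ∃ g : K.X ((ComplexShape.down ℕ).next n) ⟶ I, K.d n _ ≫ g = f := by
  constructor
  · intro h
    let S : ShortComplex D := ShortComplex.mk (K.homologyι n)
      (K.fromOpcycles n ((ComplexShape.down ℕ).next n)) (by simp)
    have hS : S.Exact := ShortComplex.exact_of_f_is_kernel _ (K.homologyIsKernel n _ rfl)
    refine ⟨hS.descToInjective (K.descOpcycles f (n+1) (by simp) hf) h, ?_⟩
    have := hS.comp_descToInjective (K.descOpcycles f (n+1) (by simp) hf) h
    rw [← K.p_fromOpcycles, Category.assoc]
    erw [this]
    simp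
  · rintro ⟨g, hg⟩
    exact K.homologyι_descOpcycles_eq_zero_of_boundary f _ _ g hg.symm

theorem extMk_eq_zero_iff'' {C : Type*} [Category* C] [Abelian C] [HasExt.{u} C]
  {X Y : C} (R : ProjectiveResolution X) {n : ℕ} (f : R.complex.X n ⟶ Y)
    (hf : R.complex.d (n+1) n ≫ f = 0) :
    R.extMk f (n+1) rfl hf = 0 ↔
      ∃ g : R.complex.X ((ComplexShape.down ℕ).next n) ⟶ Y, R.complex.d n _ ≫ g = f := by
  cases n with
  | succ p =>
    have h : (ComplexShape.down ℕ).next (p+1) = p := ChainComplex.next_nat_succ p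
    rw [R.extMk_eq_zero_iff f _ rfl hf p rfl, h]
  | zero =>
    have h : (ComplexShape.down ℕ).next 0 = 0 := ChainComplex.next_nat_zero
    rw [h]
    have h0 : R.complex.d 0 0 = 0 := R.complex.shape _ _ (by simp)
    simp only [h0, zero_comp, exists_const]
    constructor
    · intro hz
      rw [← R.extEquivCohomologyClass.apply_eq_iff_eq] at hz
      simp only [ProjectiveResolution.extEquivCohomologyClass_extMk,
        ProjectiveResolution.extEquivCohomologyClass_zero,
        CochainComplex.HomComplex.CohomologyClass.mk_eq_zero_iff] at hz
      rw [CochainComplex.HomComplex.Cocycle.toSingleMk_mem_coboundaries_iff _ _ _ _ _ 1 (by simp)] at hz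
      obtain ⟨g, hg⟩ := hz
      have : R.cochainComplex.d (-((0:ℕ):ℤ)) 1 = 0 := by
        apply (R.cochainComplex.isZero_of_isStrictlyLE 0 1).eq_of_tgt
      rw [this, zero_comp] at hg
      rw [← cancel_epi (R.cochainComplexXIso (-((0:ℕ):ℤ)) 0 rfl).hom, ← hg, comp_zero]
    · rintro rfl
      simp

end PartA1

open CategoryTheory Abelian Limits Opposite
section PartA2
variable {R : Type u} [CommRing R]

/-- The functor being derived. -/
noncomputable abbrev yF (Y : ModuleCat.{u} R) : ModuleCat.{u} R ⥤ (ModuleCat.{u} R)ᵒᵖ :=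
  ((linearYoneda R (ModuleCat.{u} R)).obj Y).rightOp

/-- Its complex. -/
noncomputable abbrev yK {X : ModuleCat.{u} R} (P : ProjectiveResolution X) (Y : ModuleCat.{u} R) :
    ChainComplex (ModuleCat.{u} R)ᵒᵖ ℕ :=
  ((yF Y).mapHomologicalComplex _).obj P.complex

/-- element to morphism. -/
noncomputable def toHomE {A Y : ModuleCat.{u} R} (f : A ⟶ Y) :
    (yF Y).obj A ⟶ op (ModuleCat.of R R) :=
  Quiver.Hom.op (X := ModuleCat.of R R) (Y := ModuleCat.of R (A ⟶ Y))
    (ModuleCat.ofHom (LinearMap.toSpanSingleton R (A ⟶ Y) f))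

theorem toHomE_map {A B Y : ModuleCat.{u} R} (a : A ⟶ B) (f : B ⟶ Y) :
    (yF Y).map a ≫ toHomE f = toHomE (a ≫ f) := by
  apply Quiver.Hom.unop_inj
  ext
  change a ≫ ((1:R) • f) = (1:R) • (a ≫ f)
  simp

theorem toHomE_inj {A Y : ModuleCat.{u} R} {f g : A ⟶ Y} (h : toHomE f = toHomE g) : f = g := by
  have := congrArg (fun k : (yF Y).obj A ⟶ op (ModuleCat.of R R) => (Quiver.Hom.unop k).hom (1:R)) h
  change (1:R) • f = (1:R) • g at this
  simpa using this

theorem toHomE_surj {A Y : ModuleCat.{u} R} (x : (yF Y).obj A ⟶ op (ModuleCat.of R R)) :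
    ∃ f : A ⟶ Y, x = toHomE f := by
  refine ⟨(Quiver.Hom.unop x).hom (1:R), ?_⟩
  apply Quiver.Hom.unop_inj
  ext
  change _ = (1:R) • (Quiver.Hom.unop x).hom (1:R)
  simp

theorem toHomE_zero {A Y : ModuleCat.{u} R} : toHomE (0 : A ⟶ Y) = 0 := by
  apply Quiver.Hom.unop_inj
  ext
  change (1:R) • (0 : A ⟶ Y) = 0
  simp

instance : Injective (op (ModuleCat.of R R)) := by
  have : Projective (ModuleCat.of R R) := (IsProjective.iff_projective R).1 inferInstance
  infer_instance

variable {X : ModuleCat.{u} R}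

theorem opc_aux {D : Type*} [Category* D] [Abelian D] {K L : ChainComplex D ℕ} (φ : K ⟶ L) (n : ℕ)
    {I : D} (k : L.X n ⟶ I) (k' : K.X n ⟶ I) (h : L.d (n+1) n ≫ k = 0)
    (h' : K.d (n+1) n ≫ k' = 0) (hn : (ComplexShape.down ℕ).prev n = n + 1) (e : φ.f n ≫ k = k') :
    HomologicalComplex.opcyclesMap φ n ≫ L.descOpcycles k (n+1) hn h =
      K.descOpcycles k' (n+1) hn h' := by
  subst e
  exact HomologicalComplex.opcyclesMap_comp_descOpcycles k (n+1) hn h φ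

/-- The comparison iso. -/
noncomputable def isoLD (P : ProjectiveResolution X) (Y : ModuleCat.{u} R) (n : ℕ) :
    ((yF Y).leftDerived n).obj X ≅ (yK P Y).homology n :=
  P.isoLeftDerivedObj (yF Y) n

theorem isoLD_nat {X' : ModuleCat.{u} R} (a : X' ⟶ X) (P : ProjectiveResolution X)
    (P' : ProjectiveResolution X') (φ : ProjectiveResolution.Hom P' P a)
    (Y : ModuleCat.{u} R) (n : ℕ) :
    ((yF Y).leftDerived n).map a ≫ (isoLD P Y n).hom = (isoLD P' Y n).hom ≫
      HomologicalComplex.homologyMap (((yF Y).mapHomologicalComplex _).map φ.hom) n :=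
  ProjectiveResolution.isoLeftDerivedObj_hom_naturality a P' P φ.hom (by
    have := φ.hom_f_zero_comp_π_f_zero
    simpa using this) (yF Y) n

theorem yK_d {P : ProjectiveResolution X} {Y : ModuleCat.{u} R} {n : ℕ}
    {f : P.complex.X n ⟶ Y} (hf : P.complex.d (n+1) n ≫ f = 0) :
    (yK P Y).d (n+1) n ≫ toHomE f = 0 := by
  have h : (yF Y).map (P.complex.d (n+1) n) ≫ toHomE f = 0 := by
    rw [toHomE_map, hf]; exact toHomE_zero
  exact h

/-- element of derived functor. -/
noncomputable def eMk (P : ProjectiveResolution X) {Y : ModuleCat.{u} R} {n : ℕ}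
    (f : P.complex.X n ⟶ Y) (hf : P.complex.d (n+1) n ≫ f = 0) :
    ((yF Y).leftDerived n).obj X ⟶ op (ModuleCat.of R R) :=
  (isoLD P Y n).hom ≫ (yK P Y).homologyι n ≫
    (yK P Y).descOpcycles (toHomE f) (n+1) (by simp) (yK_d hf)

theorem eMk_surj (P : ProjectiveResolution X) {Y : ModuleCat.{u} R} {n : ℕ}
    (x : ((yF Y).leftDerived n).obj X ⟶ op (ModuleCat.of R R)) :
    ∃ (f : P.complex.X n ⟶ Y) (hf : P.complex.d (n+1) n ≫ f = 0), x = eMk P f hf := by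
  obtain ⟨g, hg, h⟩ := homology_hom_surj (yK P Y) n _ ((isoLD P Y n).inv ≫ x)
  obtain ⟨f, rfl⟩ := toHomE_surj (A := P.complex.X n) g
  refine ⟨f, ?_, ?_⟩
  · apply toHomE_inj
    rw [← toHomE_map]
    exact Eq.trans hg toHomE_zero.symm
  · rw [Iso.inv_comp_eq] at h
    exact h

theorem eMk_zero (P : ProjectiveResolution X) {Y : ModuleCat.{u} R} {n : ℕ}
    (f : P.complex.X n ⟶ Y) (hf : P.complex.d (n+1) n ≫ f = 0) :
    eMk P f hf = 0 ↔ P.extMk f (n+1) rfl hf = 0 := by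
  have := homology_hom_zero (yK P Y) n _ (toHomE f) (yK_d hf)
  rw [extMk_eq_zero_iff'', eMk, ← Iso.eq_inv_comp, comp_zero]
  refine this.trans ?_
  constructor
  · rintro ⟨g, hg⟩
    obtain ⟨g, rfl⟩ := toHomE_surj (A := P.complex.X _) g
    refine ⟨g, ?_⟩
    apply toHomE_inj
    rw [← toHomE_map]
    exact hg
  · rintro ⟨g, hg⟩
    refine ⟨toHomE g, ?_⟩
    rw [← hg, ← toHomE_map]
    rfl

theorem eMk_nat {X' : ModuleCat.{u} R} (a : X' ⟶ X) (P : ProjectiveResolution X)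
    (P' : ProjectiveResolution X') (φ : ProjectiveResolution.Hom P' P a)
    {Y : ModuleCat.{u} R} {n : ℕ}
    (f : P.complex.X n ⟶ Y) (hf : P.complex.d (n+1) n ≫ f = 0) :
    ((yF Y).leftDerived n).map a ≫ eMk P f hf =
      eMk P' (φ.hom.f n ≫ f) (by simp [← φ.hom.comm_assoc, hf]) := by
  have h2 : (((yF Y).mapHomologicalComplex (ComplexShape.down ℕ)).map φ.hom).f n ≫ toHomE f
      = toHomE (φ.hom.f n ≫ f) := toHomE_map _ _
  rw [eMk, ← Category.assoc, isoLD_nat a P P' φ, eMk, Category.assoc,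
    HomologicalComplex.homologyι_naturality_assoc]
  refine congrArg _ (congrArg _ ?_)
  exact opc_aux _ _ _ _ _ _ _ h2

theorem nonempty_hom {X' : ModuleCat.{u} R} (a : X' ⟶ X) (P : ProjectiveResolution X)
    (P' : ProjectiveResolution X') : Nonempty (ProjectiveResolution.Hom P' P a) :=
  ⟨⟨ProjectiveResolution.lift a P' P, by
    have := ProjectiveResolution.lift_commutes_zero a P' P
    simpa using this⟩⟩

theorem cmp1 {Y : ModuleCat.{u} R} {n : ℕ}
    (x : ((yF Y).leftDerived n).obj X ⟶ op (ModuleCat.of R R)) :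
    ∃ x' : Abelian.Ext.{u} X Y n, ∀ (X' : ModuleCat.{u} R) (a : X' ⟶ X),
      ((yF Y).leftDerived n).map a ≫ x = 0 ↔ (Ext.mk₀ a).comp x' (zero_add n) = 0 := by
  obtain ⟨f, hf, rfl⟩ := eMk_surj (projectiveResolution X) x
  refine ⟨(projectiveResolution X).extMk f (n+1) rfl hf, fun X' a => ?_⟩
  obtain ⟨φ⟩ := nonempty_hom a (projectiveResolution X) (projectiveResolution X')
  rw [eMk_nat a _ _ φ, ProjectiveResolution.mk₀_comp_extMk (φ := φ), eMk_zero]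

theorem cmp2 {Y : ModuleCat.{u} R} {n : ℕ} (x' : Abelian.Ext.{u} X Y n) :
    ∃ x : ((yF Y).leftDerived n).obj X ⟶ op (ModuleCat.of R R),
     ∀ (X' : ModuleCat.{u} R) (a : X' ⟶ X),
      ((yF Y).leftDerived n).map a ≫ x = 0 ↔ (Ext.mk₀ a).comp x' (zero_add n) = 0 := by
  obtain ⟨f, hf, rfl⟩ := (projectiveResolution X).extMk_surjective x' (n+1) rfl
  refine ⟨eMk (projectiveResolution X) f hf, fun X' a => ?_⟩
  obtain ⟨φ⟩ := nonempty_hom a (projectiveResolution X) (projectiveResolution X')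
  rw [eMk_nat a _ _ φ, ProjectiveResolution.mk₀_comp_extMk (φ := φ), eMk_zero]

/-- elementwise version -/
theorem cmp1e {Y : ModuleCat.{u} R} {n : ℕ}
    (x : ((Ext R (ModuleCat.{u} R) n).obj (op X)).obj Y) :
    ∃ x' : Abelian.Ext.{u} X Y n, ∀ (X' : ModuleCat.{u} R) (a : X' ⟶ X),
      (((Ext R (ModuleCat.{u} R) n).map a.op).app Y).hom x = 0 ↔
        (Ext.mk₀ a).comp x' (zero_add n) = 0 := by
  let xx : ModuleCat.of R R ⟶ ((Ext R (ModuleCat.{u} R) n).obj (op X)).obj Y :=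
    ModuleCat.ofHom (LinearMap.toSpanSingleton R _ x)
  obtain ⟨x', hx⟩ := cmp1 (X := X) (Y := Y) (n := n) xx.op
  refine ⟨x', fun X' a => ?_⟩
  rw [← hx]
  constructor
  · intro h
    apply Quiver.Hom.unop_inj
    ext
    change (((Ext R (ModuleCat.{u} R) n).map a.op).app Y).hom ((1:R) • x) = 0
    rw [one_smul, h]
  · intro h
    have := congrArg (fun k : ((yF Y).leftDerived n).obj X' ⟶ op (ModuleCat.of R R) =>
      (Quiver.Hom.unop k).hom (1:R)) h
    change (((Ext R (ModuleCat.{u} R) n).map a.op).app Y).hom ((1:R) • x) = 0 at this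
    rwa [one_smul] at this

theorem cmp2e {Y : ModuleCat.{u} R} {n : ℕ} (x' : Abelian.Ext.{u} X Y n) :
    ∃ x : ((Ext R (ModuleCat.{u} R) n).obj (op X)).obj Y,
     ∀ (X' : ModuleCat.{u} R) (a : X' ⟶ X),
      (((Ext R (ModuleCat.{u} R) n).map a.op).app Y).hom x = 0 ↔
        (Ext.mk₀ a).comp x' (zero_add n) = 0 := by
  obtain ⟨x, hx⟩ := cmp2 x'
  refine ⟨(Quiver.Hom.unop x).hom (1:R), fun X' a => ?_⟩
  rw [← hx]
  constructor
  · intro h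
    apply Quiver.Hom.unop_inj
    ext
    exact h
  · intro h
    have := congrArg (fun k : ((yF Y).leftDerived n).obj X' ⟶ op (ModuleCat.of R R) =>
      (Quiver.Hom.unop k).hom (1:R)) h
    exact this

theorem extM_iff (i : ℕ) (M N : Type u) [AddCommGroup M] [Module R M]
    [AddCommGroup N] [Module R N] : Subsingleton (extM R i M N) ↔ EZ R i M N := by
  constructor
  · intro h
    refine EZ.of_zero fun x' => ?_
    obtain ⟨x, hx⟩ := cmp2e x'
    have := (hx _ (𝟙 _)).1 (by rw [h.elim x 0, map_zero])
    simpa using this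
  · intro h
    refine ⟨fun x y => ?_⟩
    suffices H : ∀ x : extM R i M N, x = 0 by rw [H x, H y]
    intro x
    obtain ⟨x', hx⟩ := cmp1e (X := ModuleCat.of R M) (Y := ModuleCat.of R N) x
    have := (hx _ (𝟙 _)).2 (by rw [h.eq_zero x', Ext.comp_zero])
    simpa using this

end PartA2

open CategoryTheory Abelian Limits Opposite
section PartA3
variable {R : Type u} [CommRing R]

theorem colim_sub {J : Type} [SmallCategory J] [IsFiltered J]
    (F : J ⥤ ModuleCat.{u} R ⥤ ModuleCat.{u} R) [HasColimit F] (Y : ModuleCat.{u} R) :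
    Subsingleton ((colimit F).obj Y) ↔ ∀ (j : J) (x : (F.obj j).obj Y), ∃ (j' : J) (f : j ⟶ j'),
      ((F.map f).app Y).hom x = 0 := by
  let ev : (ModuleCat.{u} R ⥤ ModuleCat.{u} R) ⥤ ModuleCat.{u} R := (evaluation _ _).obj Y
  have hc : IsColimit (ev.mapCocone (colimit.cocone F)) :=
    isColimitOfPreserves ev (colimit.isColimit F)
  have : PreservesColimitsOfShape J (forget (ModuleCat.{u} R)) := by
    have := CategoryTheory.Limits.PreservesFilteredColimitsOfSize.preserves_filtered_colimits (F := forget (ModuleCat.{u} R)) (ULiftHom (ULift.{u} J)) 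
    exact preservesColimitsOfShape_of_equiv (ULiftHomULiftCategory.equiv.{u,u} J).symm _
  constructor
  · intro h j x
    have h1 : (ev.mapCocone (colimit.cocone F)).ι.app j x =
      (ev.mapCocone (colimit.cocone F)).ι.app j 0 := h.elim _ _
    rw [Concrete.isColimit_rep_eq_iff_exists _ hc] at h1
    obtain ⟨k, f, g, h1⟩ := h1
    refine ⟨k, f, ?_⟩
    rw [map_zero] at h1
    exact h1
  · intro h
    refine ⟨fun x y => ?_⟩
    suffices H : ∀ x : (colimit F).obj Y, x = 0 by rw [H x, H y]
    intro x
    obtain ⟨j, y, hy⟩ := Concrete.isColimit_exists_rep _ hc x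
    obtain ⟨j', f, hf⟩ := h j y
    rw [← hy]
    have := (ev.mapCocone (colimit.cocone F)).w f
    rw [← this]
    change (ev.mapCocone (colimit.cocone F)).ι.app j' (((F.map f).app Y).hom y) = 0
    rw [hf, map_zero]

/-- transition map `R/I^n' → R/I^n`. -/
def trI (I : Ideal R) {n n' : ℕ} (h : n ≤ n') : (R ⧸ I ^ n') →ₗ[R] (R ⧸ I ^ n) :=
  Submodule.mapQ _ _ LinearMap.id (Ideal.pow_le_pow_right h)

theorem locCoh_iff (I : Ideal R) (i : ℕ) (M : Type u) [AddCommGroup M] [Module R M] :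
    Subsingleton (locCoh R I i M) ↔
      ∀ n : ℕ, ∀ x : Abelian.Ext.{u} (ModuleCat.of R (R ⧸ I ^ n)) (ModuleCat.of R M) i,
        ∃ (n' : ℕ) (h : n ≤ n'), (Ext.mk₀ (ModuleCat.ofHom (trI I h))).comp x (zero_add i) = 0 := by
  let F := localCohomology.diagram (localCohomology.idealPowersDiagram I) i
  have hF := colim_sub F (ModuleCat.of R M)
  refine Iff.trans hF ?_
  constructor
  · intro h n x
    obtain ⟨y, hy⟩ := cmp2e x
    obtain ⟨j', f, hf⟩ := h (op (op n)) y
    refine ⟨j'.unop.unop, f.unop.unop.down.down, ?_⟩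
    exact (hy _ _).1 hf
  · intro h j x
    obtain ⟨y, hy⟩ := cmp1e (X := ModuleCat.of R (R ⧸ I ^ j.unop.unop)) (Y := ModuleCat.of R M) x
    obtain ⟨n', hn, hx⟩ := h j.unop.unop y
    refine ⟨op (op n'), Quiver.Hom.op (Quiver.Hom.op (homOfLE hn)), ?_⟩
    exact (hy _ _).2 hx
end PartA3

open CategoryTheory Abelian Limits Opposite
section PartB1
variable {R : Type u} [CommRing R] (I : Ideal R)

/-- precomposition with the transition map -/
noncomputable def trE (N : Type u) [AddCommGroup N] [Module R N] (i : ℕ) (n n' : ℕ) (h : n ≤ n') :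
    Abelian.Ext.{u} (ModuleCat.of R (R ⧸ I ^ n)) (ModuleCat.of R N) i →ₗ[R]
    Abelian.Ext.{u} (ModuleCat.of R (R ⧸ I ^ n')) (ModuleCat.of R N) i where
  toFun x := (Ext.mk₀ (ModuleCat.ofHom (trI I h))).comp x (zero_add i)
  map_add' x y := by rw [Ext.comp_add]
  map_smul' r x := by rw [Ext.comp_smul]; rfl

theorem trI_refl (n : ℕ) : trI I (le_refl n) = LinearMap.id := by
  ext; rfl

theorem trI_trans {n n' n'' : ℕ} (h : n ≤ n') (h' : n' ≤ n'') :
    trI I h ∘ₗ trI I h' = trI I (h.trans h') := by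
  ext; rfl

variable (N : Type u) [AddCommGroup N] [Module R N] (i : ℕ)

instance trE_dir : DirectedSystem
    (fun n : ℕ => Abelian.Ext.{u} (ModuleCat.of R (R ⧸ I ^ n)) (ModuleCat.of R N) i)
    (fun n n' h => trE I N i n n' h) where
  map_self n x := by
    change (Ext.mk₀ (ModuleCat.ofHom (trI I (le_refl n)))).comp x (zero_add i) = x
    rw [trI_refl, ModuleCat.ofHom_id]; simp
  map_map k j i' hij hjk x := by
    change (Ext.mk₀ (ModuleCat.ofHom (trI I hjk))).comp
      ((Ext.mk₀ (ModuleCat.ofHom (trI I hij))).comp x (zero_add i)) (zero_add i) =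
      (Ext.mk₀ (ModuleCat.ofHom (trI I (hij.trans hjk)))).comp x (zero_add i)
    rw [← trI_trans I hij hjk, ModuleCat.ofHom_comp, ← Ext.mk₀_comp_mk₀,
      Ext.comp_assoc (h₁₂ := add_zero 0) (h₂₃ := zero_add i) (h := by simp)]

/-- The `Ext` modules -/
abbrev XE (n : ℕ) : Type u :=
  Abelian.Ext.{u} (ModuleCat.of R (R ⧸ I ^ n)) (ModuleCat.of R N) i

/-- My local cohomology. -/
def LC : Type u := Module.DirectLimit (R := R) (fun n : ℕ => XE I N i n)
    (fun n n' h => trE I N i n n' h)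

noncomputable instance : AddCommGroup (LC I N i) :=
  inferInstanceAs (AddCommGroup (Module.DirectLimit (R := R) (fun n : ℕ => XE I N i n)
    (fun n n' h => trE I N i n n' h)))

noncomputable instance : Module R (LC I N i) :=
  inferInstanceAs (Module R (Module.DirectLimit (R := R) (fun n : ℕ => XE I N i n)
    (fun n n' h => trE I N i n n' h)))

variable {N i}

/-- element -/
noncomputable def LC.mk (n : ℕ) : XE I N i n →ₗ[R] LC I N i :=
  Module.DirectLimit.of R ℕ (fun n : ℕ => XE I N i n)
    (fun n n' h => trE I N i n n' h) n

theorem LC.ind (z : LC I N i) : ∃ n x, z = LC.mk I n x := by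
  obtain ⟨n, x, h⟩ := Module.DirectLimit.exists_of (G := fun n : ℕ => XE I N i n)
    (f := fun n n' h => trE I N i n n' h) z
  exact ⟨n, x, h.symm⟩

theorem LC.mk_tr {n n' : ℕ} (h : n ≤ n')
    (x : Abelian.Ext.{u} (ModuleCat.of R (R ⧸ I ^ n)) (ModuleCat.of R N) i) :
    LC.mk I n' (trE I N i n n' h x) = LC.mk I n x :=
  Module.DirectLimit.of_f (G := fun n : ℕ => XE I N i n)
    (f := fun n n' h => trE I N i n n' h)

theorem LC.mk_zero {n : ℕ}
    {x : Abelian.Ext.{u} (ModuleCat.of R (R ⧸ I ^ n)) (ModuleCat.of R N) i} 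
    (hx : LC.mk I n x = 0) : ∃ n', ∃ h : n ≤ n', trE I N i n n' h x = 0 :=
  Module.DirectLimit.of.zero_exact (G := fun n : ℕ => XE I N i n)
    (f := fun n n' h => trE I N i n n' h) hx

/-- lift -/
noncomputable def LC.lift {P : Type u} [AddCommGroup P] [Module R P] (g : ∀ n, XE I N i n →ₗ[R] P)
    (hg : ∀ n n' h x, g n' (trE I N i n n' h x) = g n x) : LC I N i →ₗ[R] P :=
  Module.DirectLimit.lift R ℕ (fun n : ℕ => XE I N i n)
    (fun n n' h => trE I N i n n' h) g hg

theorem LC.lift_mk {P : Type u} [AddCommGroup P] [Module R P] (g : ∀ n, XE I N i n →ₗ[R] P)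
    (hg : ∀ n n' h x, g n' (trE I N i n n' h x) = g n x) (n : ℕ) (x : XE I N i n) :
    LC.lift I g hg (LC.mk I n x) = g n x :=
  Module.DirectLimit.lift_of (G := fun n : ℕ => XE I N i n)
    (f := fun n n' h => trE I N i n n' h) _ _ _

theorem locCoh_LC : Subsingleton (locCoh R I i N) ↔ Subsingleton (LC I N i) := by
  rw [locCoh_iff]
  constructor
  · intro h
    refine ⟨fun a b => ?_⟩
    suffices H : ∀ a : LC I N i, a = 0 by rw [H a, H b]
    intro a
    obtain ⟨n, x, rfl⟩ := LC.ind I a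
    obtain ⟨n', h, hx⟩ := h n x
    rw [← LC.mk_tr I h]
    change LC.mk I n' ((Ext.mk₀ (ModuleCat.ofHom (trI I h))).comp x (zero_add i)) = 0
    rw [hx, _root_.map_zero]
  · intro h n x
    exact LC.mk_zero I (h.elim (LC.mk I n x) 0)

variable {A B C : Type u} [AddCommGroup A] [Module R A] [AddCommGroup B] [Module R B]
  [AddCommGroup C] [Module R C]

/-- postcomposition with an `Ext` class -/
noncomputable def LC.post {k j : ℕ} (α : Abelian.Ext.{u} (ModuleCat.of R A) (ModuleCat.of R B) k)
    (h : i + k = j) : LC I A i →ₗ[R] LC I B j :=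
  LC.lift I (fun n => (LC.mk I n) ∘ₗ
    { toFun := fun x => x.comp α h
      map_add' := fun x y => by rw [Ext.add_comp]
      map_smul' := fun r x => by rw [Ext.smul_comp]; rfl }) (by
    intro n n' hn x
    simp only [LinearMap.comp_apply, LinearMap.coe_mk, AddHom.coe_mk]
    rw [← LC.mk_tr I hn]
    congr 1
    change ((Ext.mk₀ (ModuleCat.ofHom (trI I hn))).comp x (zero_add i)).comp α h =
      (Ext.mk₀ (ModuleCat.ofHom (trI I hn))).comp (x.comp α h) (zero_add j)
    rw [Ext.comp_assoc]
    omega)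

theorem LC.post_mk {k j : ℕ} (α : Abelian.Ext.{u} (ModuleCat.of R A) (ModuleCat.of R B) k)
    (h : i + k = j) (n : ℕ)
    (x : Abelian.Ext.{u} (ModuleCat.of R (R ⧸ I ^ n)) (ModuleCat.of R A) i) :
    LC.post I α h (LC.mk I n x) = LC.mk I n (x.comp α h) :=
  LC.lift_mk I _ _ _ _

theorem LC.exact_gen {k j k' j' : ℕ}
    (α : Abelian.Ext.{u} (ModuleCat.of R A) (ModuleCat.of R B) k) (h : i + k = j)
    (β : Abelian.Ext.{u} (ModuleCat.of R B) (ModuleCat.of R C) k') (h' : j + k' = j')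
    (H : ∀ (X : ModuleCat.{u} R) (y : Abelian.Ext.{u} X (ModuleCat.of R B) j), y.comp β h' = 0 →
      ∃ x : Abelian.Ext.{u} X (ModuleCat.of R A) i, x.comp α h = y)
    (z : LC I B j) (hz : LC.post I β h' z = 0) : ∃ w : LC I A i, LC.post I α h w = z := by
  obtain ⟨n, y, rfl⟩ := LC.ind I z
  rw [LC.post_mk] at hz
  obtain ⟨n', hn, hy⟩ := LC.mk_zero I hz
  have e : (trE I B j n n' hn y).comp β h' = trE I C j' n n' hn (y.comp β h') := by
    change ((Ext.mk₀ (ModuleCat.ofHom (trI I hn))).comp y (zero_add j)).comp β h' =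
      (Ext.mk₀ (ModuleCat.ofHom (trI I hn))).comp (y.comp β h') (zero_add j')
    rw [Ext.comp_assoc]
    omega
  obtain ⟨x, hx⟩ := H _ (trE I B j n n' hn y) (e.trans hy)
  exact ⟨LC.mk I n' x, by rw [LC.post_mk, hx, LC.mk_tr]⟩

/-- functoriality -/
noncomputable def LC.map (i : ℕ) (f : A →ₗ[R] B) : LC I A i →ₗ[R] LC I B i :=
  LC.post I (Ext.mk₀ (ModuleCat.ofHom f)) (add_zero i)

theorem LC.map_comp (f : A →ₗ[R] B) (g : B →ₗ[R] C) (z : LC I A i) :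
    LC.map I i (g ∘ₗ f) z = LC.map I i g (LC.map I i f z) := by
  obtain ⟨n, y, rfl⟩ := LC.ind I z
  simp only [LC.map, LC.post_mk, ModuleCat.ofHom_comp, ← Ext.mk₀_comp_mk₀]
  rw [Ext.comp_assoc]
  omega

theorem LC.map_id (z : LC I A i) : LC.map I i LinearMap.id z = z := by
  obtain ⟨n, y, rfl⟩ := LC.ind I z
  simp only [LC.map, LC.post_mk, ModuleCat.ofHom_id, Ext.comp_mk₀_id]

theorem LC.map_smul (r : R) (f : A →ₗ[R] B) (z : LC I A i) :
    LC.map I i (r • f) z = r • LC.map I i f z := by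
  obtain ⟨n, y, rfl⟩ := LC.ind I z
  have : ModuleCat.ofHom (r • f) = r • ModuleCat.ofHom f := rfl
  simp only [LC.map, LC.post_mk, this, Ext.mk₀_smul, Ext.comp_smul, _root_.map_smul]

theorem LC.map_add (f g : A →ₗ[R] B) (z : LC I A i) :
    LC.map I i (f + g) z = LC.map I i f z + LC.map I i g z := by
  obtain ⟨n, y, rfl⟩ := LC.ind I z
  have : ModuleCat.ofHom (f + g) = ModuleCat.ofHom f + ModuleCat.ofHom g := rfl
  simp only [LC.map, LC.post_mk, this, Ext.mk₀_add, Ext.comp_add, _root_.map_add]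

theorem LC.map_zero (z : LC I A i) : LC.map I i (0 : A →ₗ[R] B) z = 0 := by
  have := LC.map_smul I 0 (0 : A →ₗ[R] B) z
  simpa using this

theorem LC.map_sum {ι : Type*} (s : Finset ι) (f : ι → A →ₗ[R] B) (z : LC I A i) :
    LC.map I i (∑ k ∈ s, f k) z = ∑ k ∈ s, LC.map I i (f k) z := by
  classical
  induction s using Finset.induction_on with
  | empty => simp [LC.map_zero]
  | insert a s ha ih => rw [Finset.sum_insert ha, Finset.sum_insert ha, LC.map_add, ih]

theorem LC.map_lsmul (r : R) (z : LC I A i) :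
    LC.map I i (LinearMap.lsmul R A r) z = r • z := by
  have : LinearMap.lsmul R A r = r • LinearMap.id := by ext; simp
  rw [this, LC.map_smul, LC.map_id]

theorem LC.smul_zero_of (r : R) (h : ∀ a : A, r • a = 0) (z : LC I A i) : r • z = 0 := by
  rw [← LC.map_lsmul]
  have : LinearMap.lsmul R A r = 0 := by ext; simp [h]
  rw [this, LC.map_zero]

theorem LC.torsion (z : LC I A i) : ∃ n : ℕ, ∀ r ∈ I ^ n, r • z = 0 := by
  obtain ⟨n, y, rfl⟩ := LC.ind I z
  refine ⟨n, fun r hr => ?_⟩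
  rw [← _root_.map_smul]
  have : r • y = (Ext.mk₀ (r • 𝟙 (ModuleCat.of R (R ⧸ I ^ n)))).comp y (zero_add i) := by
    rw [Ext.mk₀_smul, Ext.smul_comp, Ext.mk₀_id_comp]
  have h0 : r • 𝟙 (ModuleCat.of R (R ⧸ I ^ n)) = 0 := by
    ext
    change r • (Ideal.Quotient.mk (I^n) 1) = 0
    rw [← Ideal.Quotient.mk_eq_mk, ← Submodule.Quotient.mk_smul]
    exact (Submodule.Quotient.mk_eq_zero _).2 (by simpa using hr)
  rw [this, h0, Ext.mk₀_zero, Ext.zero_comp, _root_.map_zero]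

theorem LC.torsion_el {u : R} (hu : u ∈ I) (z : LC I A i) : ∃ n : ℕ, u ^ n • z = 0 := by
  obtain ⟨n, hn⟩ := LC.torsion I z
  exact ⟨n, hn _ (Ideal.pow_mem_pow hu n)⟩

theorem LC.sub_of_inj {u : R} (hu : u ∈ I) (h : ∀ z : LC I A i, u • z = 0 → z = 0) :
    Subsingleton (LC I A i) := by
  refine ⟨fun a b => ?_⟩
  suffices H : ∀ a : LC I A i, a = 0 by rw [H a, H b]
  intro z
  obtain ⟨n, hn⟩ := LC.torsion_el I hu z
  induction n with
  | zero => simpa using hn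
  | succ n ih => exact ih (h _ (by rw [smul_smul, ← pow_succ', hn]))

theorem LC.sub_iso (e : A ≃ₗ[R] B) (h : Subsingleton (LC I A i)) : Subsingleton (LC I B i) := by
  refine ⟨fun a b => ?_⟩
  suffices H : ∀ a : LC I B i, a = 0 by rw [H a, H b]
  intro z
  have : z = LC.map I i (e : A →ₗ[R] B) (LC.map I i (e.symm : B →ₗ[R] A) z) := by
    rw [← LC.map_comp]; simp [LC.map_id]
  rw [this, h.elim (LC.map I i (e.symm : B →ₗ[R] A) z) 0, _root_.map_zero]

theorem LC.sub_of_sub [Subsingleton A] : Subsingleton (LC I A i) := by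
  refine ⟨fun a b => ?_⟩
  suffices H : ∀ a : LC I A i, a = 0 by rw [H a, H b]
  intro z
  have : (LinearMap.id : A →ₗ[R] A) = 0 := by ext x; exact Subsingleton.elim _ _
  rw [← LC.map_id I z, this, LC.map_zero]

section ses
variable (f : A →ₗ[R] B) (g : B →ₗ[R] C) (hf : Function.Injective f)
    (hfg : Function.Exact f g) (hg : Function.Surjective g)

/-- connecting map -/
noncomputable def LC.delta (i : ℕ) : LC I C i →ₗ[R] LC I A (i+1) :=
  LC.post I (sc_se f g hf hfg hg).extClass rfl

include hf hfg hg

theorem LC.ex2 (z : LC I B i) (hz : LC.map I i g z = 0) : ∃ w, LC.map I i f w = z :=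
  LC.exact_gen I _ _ _ _
    (fun X y hy => Ext.covariant_sequence_exact₂ X (sc_se f g hf hfg hg) y hy) z hz

theorem LC.ex1 (z : LC I A (i+1)) (hz : LC.map I (i+1) f z = 0) :
    ∃ w, LC.delta I f g hf hfg hg i w = z :=
  LC.exact_gen I _ _ _ _
    (fun X y hy => Ext.covariant_sequence_exact₁ X (sc_se f g hf hfg hg) y hy rfl) z hz

theorem LC.ex3 (z : LC I C i) (hz : LC.delta I f g hf hfg hg i z = 0) :
    ∃ w, LC.map I i g w = z :=
  LC.exact_gen I _ _ _ _
    (fun X y hy => Ext.covariant_sequence_exact₃ X (sc_se f g hf hfg hg) y rfl hy) z hz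

theorem LC.map_delta (z : LC I C i) : LC.map I (i+1) f (LC.delta I f g hf hfg hg i z) = 0 := by
  obtain ⟨n, y, rfl⟩ := LC.ind I z
  simp only [LC.map, LC.delta, LC.post_mk]
  rw [Ext.comp_assoc (h₁₂ := rfl) (h₂₃ := add_zero 1) (h := by omega)]
  have := (sc_se f g hf hfg hg).extClass_comp
  change LC.mk I n (y.comp ((sc_se f g hf hfg hg).extClass.comp (Ext.mk₀ (sc f g hfg).f) _) _) = 0
  rw [this, Ext.comp_zero, _root_.map_zero]

theorem LC.delta_map (z : LC I B i) : LC.delta I f g hf hfg hg i (LC.map I i g z) = 0 := by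
  obtain ⟨n, y, rfl⟩ := LC.ind I z
  simp only [LC.map, LC.delta, LC.post_mk]
  rw [Ext.comp_assoc (h₁₂ := add_zero i) (h₂₃ := zero_add 1) (h := by omega)]
  have := (sc_se f g hf hfg hg).comp_extClass
  change LC.mk I n (y.comp ((Ext.mk₀ (sc f g hfg).g).comp (sc_se f g hf hfg hg).extClass _) _) = 0
  rw [this, Ext.comp_zero, _root_.map_zero]

omit hg hf in
theorem LC.map_map (z : LC I A i) : LC.map I i g (LC.map I i f z) = 0 := by
  rw [← LC.map_comp, hfg.linearMap_comp_eq_zero, LC.map_zero]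

omit hfg hg in
theorem LC.map_inj0 (z : LC I A 0) (hz : LC.map I 0 f z = 0) : z = 0 := by
  obtain ⟨n, y, rfl⟩ := LC.ind I z
  simp only [LC.map, LC.post_mk] at hz
  obtain ⟨n', hn, hy⟩ := LC.mk_zero I hz
  rw [← LC.mk_tr I hn]
  have e : (trE I A 0 n n' hn y).comp (Ext.mk₀ (ModuleCat.ofHom f)) (add_zero 0) = 0 := by
    rw [← hy]
    change ((Ext.mk₀ (ModuleCat.ofHom (trI I hn))).comp y (zero_add 0)).comp _ _ =
      (Ext.mk₀ (ModuleCat.ofHom (trI I hn))).comp (y.comp _ _) (zero_add 0)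
    rw [Ext.comp_assoc]
    omega
  obtain ⟨φ, hφ⟩ := (Ext.mk₀_bijective _ _).2 (trE I A 0 n n' hn y)
  rw [← hφ] at e ⊢
  rw [Ext.mk₀_comp_mk₀, Ext.mk₀_eq_zero_iff] at e
  have : Mono (ModuleCat.ofHom f) := (ModuleCat.mono_iff_injective _).2 hf
  rw [zero_of_comp_mono _ e, Ext.mk₀_zero, _root_.map_zero]

theorem LC.sub2 (h1 : Subsingleton (LC I A i)) (h2 : Subsingleton (LC I C i)) :
    Subsingleton (LC I B i) := by
  refine ⟨fun a b => ?_⟩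
  suffices H : ∀ a : LC I B i, a = 0 by rw [H a, H b]
  intro z
  obtain ⟨w, rfl⟩ := LC.ex2 I f g hf hfg hg z (h2.elim _ _)
  rw [h1.elim w 0, _root_.map_zero]

theorem LC.sub1 (h1 : Subsingleton (LC I C i)) (h2 : Subsingleton (LC I B (i+1))) :
    Subsingleton (LC I A (i+1)) := by
  refine ⟨fun a b => ?_⟩
  suffices H : ∀ a : LC I A (i+1), a = 0 by rw [H a, H b]
  intro z
  obtain ⟨w, rfl⟩ := LC.ex1 I f g hf hfg hg z (h2.elim _ _)
  rw [h1.elim w 0, _root_.map_zero]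

theorem LC.sub3 (h1 : Subsingleton (LC I B i)) (h2 : Subsingleton (LC I A (i+1))) :
    Subsingleton (LC I C i) := by
  refine ⟨fun a b => ?_⟩
  suffices H : ∀ a : LC I C i, a = 0 by rw [H a, H b]
  intro z
  obtain ⟨w, rfl⟩ := LC.ex3 I f g hf hfg hg z (h2.elim _ _)
  rw [h1.elim w 0, _root_.map_zero]
end ses

end PartB1

open CategoryTheory Abelian Limits Opposite
section PartB2
variable {R : Type u} [CommRing R] (I : Ideal R)
variable {A B C N : Type u} [AddCommGroup A] [Module R A] [AddCommGroup B] [Module R B]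
  [AddCommGroup C] [Module R C] [AddCommGroup N] [Module R N]

/-- evaluation at one -/
noncomputable def LC.ev0 (N : Type u) [AddCommGroup N] [Module R N] (n : ℕ) : XE I N 0 n →ₗ[R] N where
  toFun x := (Ext.homEquiv₀ x).hom (Submodule.Quotient.mk (1 : R))
  map_add' x y := by
    have : Ext.homEquiv₀ (x + y) = Ext.homEquiv₀ x + Ext.homEquiv₀ y :=
      (Ext.linearEquiv₀ (R := R)).map_add x y
    rw [this]; rfl
  map_smul' r x := by
    have : Ext.homEquiv₀ (r • x) = r • Ext.homEquiv₀ x := (Ext.linearEquiv₀ (R := R)).map_smul r x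
    rw [this]; rfl

theorem LC.ev0_mk₀ (n : ℕ) (φ : (R ⧸ I ^ n) →ₗ[R] N) :
    LC.ev0 I N n (Ext.mk₀ (ModuleCat.ofHom φ)) = φ (Submodule.Quotient.mk 1) := by
  have : Ext.homEquiv₀ (Ext.mk₀ (ModuleCat.ofHom φ)) = ModuleCat.ofHom φ := by
    exact Ext.homEquiv₀.apply_symm_apply _
  simp [LC.ev0, this]

theorem LC.ex_mk₀ (n : ℕ) (x : XE I N 0 n) : ∃ φ : (R ⧸ I ^ n) →ₗ[R] N,
    x = Ext.mk₀ (ModuleCat.ofHom φ) := by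
  obtain ⟨φ, hφ⟩ := (Ext.mk₀_bijective _ _).2 x
  exact ⟨φ.hom, hφ.symm⟩

/-- evaluation at one -/
noncomputable def LC.ev (N : Type u) [AddCommGroup N] [Module R N] : LC I N 0 →ₗ[R] N :=
  LC.lift I (LC.ev0 I N) (by
    intro n n' h x
    obtain ⟨φ, rfl⟩ := LC.ex_mk₀ I n x
    change LC.ev0 I N n' ((Ext.mk₀ (ModuleCat.ofHom (trI I h))).comp (Ext.mk₀ (ModuleCat.ofHom φ)) (zero_add 0)) = _
    rw [Ext.mk₀_comp_mk₀, ← ModuleCat.ofHom_comp, LC.ev0_mk₀, LC.ev0_mk₀]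
    rfl)

theorem LC.ev_mk (n : ℕ) (φ : (R ⧸ I ^ n) →ₗ[R] N) :
    LC.ev I N (LC.mk I n (Ext.mk₀ (ModuleCat.ofHom φ))) = φ (Submodule.Quotient.mk 1) := by
  rw [LC.ev, LC.lift_mk, LC.ev0_mk₀]

theorem LC.ev_inj : Function.Injective (LC.ev I N) := by
  rw [injective_iff_map_eq_zero]
  intro z hz
  obtain ⟨n, x, rfl⟩ := LC.ind I z
  obtain ⟨φ, rfl⟩ := LC.ex_mk₀ I n x
  rw [LC.ev_mk] at hz
  have : φ = 0 := by
    ext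
    exact hz
  rw [this]
  change LC.mk I n (Ext.mk₀ 0) = 0
  rw [Ext.mk₀_zero, _root_.map_zero]

theorem LC.ev_surj (y : N) (n : ℕ) (h : ∀ r ∈ I ^ n, r • y = 0) : ∃ z, LC.ev I N z = y := by
  refine ⟨LC.mk I n (Ext.mk₀ (ModuleCat.ofHom
    (Submodule.liftQ (I ^ n) (LinearMap.toSpanSingleton R N y) ?_))), ?_⟩
  · intro r hr
    simpa using h r hr
  · rw [LC.ev_mk]
    exact (Submodule.liftQ_apply _ _ _).trans (by simp)

theorem LC.ev_nat (f : A →ₗ[R] B) (z : LC I A 0) :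
    LC.ev I B (LC.map I 0 f z) = f (LC.ev I A z) := by
  obtain ⟨n, x, rfl⟩ := LC.ind I z
  obtain ⟨φ, rfl⟩ := LC.ex_mk₀ I n x
  rw [LC.ev_mk, LC.map, LC.post_mk, Ext.mk₀_comp_mk₀, ← ModuleCat.ofHom_comp, LC.ev_mk]
  rfl

/-- elementwise torsion -/
def IsTor (N : Type u) [AddCommGroup N] [Module R N] : Prop :=
  ∀ y : N, ∃ n : ℕ, ∀ r ∈ I ^ n, r • y = 0

theorem IsTor.quot {f : A →ₗ[R] B} (hf : Function.Surjective f) (h : IsTor I A) : IsTor I B := by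
  intro y
  obtain ⟨x, rfl⟩ := hf y
  obtain ⟨n, hn⟩ := h x
  exact ⟨n, fun r hr => by rw [← _root_.map_smul, hn r hr, _root_.map_zero]⟩

theorem IsTor.unif (h : IsTor I A) (N : Submodule R A) (hN : N.FG) :
    ∃ n : ℕ, ∀ r ∈ I ^ n, ∀ y ∈ N, r • y = 0 := by
  induction N, hN using Submodule.fg_induction with
  | singleton x =>
    obtain ⟨n, hn⟩ := h x
    refine ⟨n, fun r hr y hy => ?_⟩
    obtain ⟨a, rfl⟩ := Submodule.mem_span_singleton.1 hy
    rw [smul_comm, hn r hr, smul_zero]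
  | sup N₁ N₂ _ _ h1 h2 =>
    obtain ⟨n1, h1⟩ := h1
    obtain ⟨n2, h2⟩ := h2
    refine ⟨max n1 n2, fun r hr y hy => ?_⟩
    obtain ⟨a, ha, b, hb, rfl⟩ := Submodule.mem_sup.1 hy
    rw [smul_add, h1 r (Ideal.pow_le_pow_right (le_max_left _ _) hr) a ha,
      h2 r (Ideal.pow_le_pow_right (le_max_right _ _) hr) b hb, add_zero]

/-- torsion submodule -/
def Gam (N : Type u) [AddCommGroup N] [Module R N] : Submodule R N where
  carrier := {y | ∃ n : ℕ, ∀ r ∈ I ^ n, r • y = 0}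
  zero_mem' := ⟨0, fun r _ => smul_zero r⟩
  add_mem' := by
    rintro a b ⟨n1, h1⟩ ⟨n2, h2⟩
    refine ⟨max n1 n2, fun r hr => ?_⟩
    rw [smul_add, h1 r (Ideal.pow_le_pow_right (le_max_left _ _) hr),
      h2 r (Ideal.pow_le_pow_right (le_max_right _ _) hr), add_zero]
  smul_mem' := by
    rintro c a ⟨n, h⟩
    exact ⟨n, fun r hr => by rw [smul_comm, h r hr, smul_zero]⟩

theorem Gam_tor : IsTor I (Gam I N) := by
  rintro ⟨y, n, h⟩
  exact ⟨n, fun r hr => Subtype.ext (h r hr)⟩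

theorem Gam_baer [IsNoetherianRing R] (hN : Module.Injective R N) : Module.Baer R (Gam I N) := by
  intro J g
  obtain ⟨n, hn⟩ := IsTor.unif I (Gam_tor I (N := N)) (LinearMap.range g)
    (by rw [LinearMap.range_eq_map]; exact (IsNoetherian.noetherian (⊤ : Submodule R J)).map g)
  obtain ⟨k, hk⟩ := Ideal.exists_pow_inf_eq_pow_smul I (M := R) J
  have hk := hk (n + k) (by omega)
  rw [Nat.add_sub_cancel] at hk
  have key : ∀ a (ha : a ∈ J), a ∈ I ^ (n + k) → g ⟨a, ha⟩ = 0 := by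
    intro a ha haI
    have h1 : a ∈ I ^ n • J := by
      have : a ∈ I ^ (n+k) • (⊤ : Submodule R R) ⊓ J := ⟨by simpa using haI, ha⟩
      rw [hk] at this
      exact Submodule.smul_mono le_rfl inf_le_right this
    have h2 : ∀ a ∈ I ^ n • J, ∃ ha : a ∈ J, g ⟨a, ha⟩ = 0 := by
      intro a ha
      refine Submodule.smul_induction_on ha (fun r hr x hx => ⟨J.mul_mem_left _ hx, ?_⟩) ?_
      · have : (⟨r • x, J.mul_mem_left _ hx⟩ : J) = r • ⟨x, hx⟩ := rfl
        rw [this, _root_.map_smul]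
        exact hn r hr _ ⟨_, rfl⟩
      · rintro x y ⟨hx, hx'⟩ ⟨hy, hy'⟩
        refine ⟨J.add_mem hx hy, ?_⟩
        have : (⟨x + y, J.add_mem hx hy⟩ : J) = ⟨x, hx⟩ + ⟨y, hy⟩ := rfl
        rw [this, _root_.map_add, hx', hy', add_zero]
    exact (h2 a h1).2
  let S : Submodule R J := Submodule.comap J.subtype (I ^ (n+k))
  let ι : (J ⧸ S) →ₗ[R] (R ⧸ I ^ (n+k)) := Submodule.mapQ _ _ J.subtype le_rfl
  have hι : Function.Injective ι := by
    rw [injective_iff_map_eq_zero]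
    intro x hx
    obtain ⟨x, rfl⟩ := Submodule.Quotient.mk_surjective _ x
    rw [Submodule.mapQ_apply, Submodule.Quotient.mk_eq_zero] at hx
    exact (Submodule.Quotient.mk_eq_zero _).2 hx
  let h : (J ⧸ S) →ₗ[R] N := Submodule.liftQ S ((Gam I N).subtype ∘ₗ g) (by
    rintro ⟨x, hx⟩ hxS
    have := key x hx hxS
    simp [this])
  obtain ⟨ψ, hψ⟩ := hN.out ι hι h
  refine ⟨LinearMap.codRestrict (Gam I N) (ψ ∘ₗ Submodule.mkQ _) ?_, ?_⟩
  · intro c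
    refine ⟨n + k, fun r hr => ?_⟩
    rw [← _root_.map_smul]
    have : r • c ∈ I ^ (n+k) := by
      rw [smul_eq_mul]; exact Ideal.mul_mem_right _ _ hr
    rw [LinearMap.comp_apply, Submodule.mkQ_apply, (Submodule.Quotient.mk_eq_zero _).2 this,
      _root_.map_zero]
  · intro x hx
    apply Subtype.ext
    exact hψ (Submodule.Quotient.mk ⟨x, hx⟩)

theorem LC.inj (i : ℕ) (h : Injective (ModuleCat.of R N)) : Subsingleton (LC I N (i+1)) := by
  refine ⟨fun a b => ?_⟩
  suffices H : ∀ a : LC I N (i+1), a = 0 by rw [H a, H b]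
  intro z
  obtain ⟨n, x, rfl⟩ := LC.ind I z
  rw [(EZ.inj i h).eq_zero x, _root_.map_zero]

theorem LC.surj0 (f : A →ₗ[R] B) (hf : Function.Surjective f) (hA : IsTor I A) (z : LC I B 0) :
    ∃ w, LC.map I 0 f w = z := by
  obtain ⟨y, hy⟩ := hf (LC.ev I B z)
  obtain ⟨n, hn⟩ := hA y
  obtain ⟨w, rfl⟩ := LC.ev_surj I y n hn
  exact ⟨w, LC.ev_inj I (by rw [LC.ev_nat, hy])⟩

theorem exists_inj (N : Type u) [AddCommGroup N] [Module R N] : ∃ (E : Type u) (_ : AddCommGroup E)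
    (_ : Module R E) (_ : Module.Injective R E) (f0 : N →ₗ[R] E), Function.Injective f0 := by
  let E : ModuleCat.{u} R := Injective.under (ModuleCat.of R N)
  have h : Injective E := inferInstanceAs (Injective (Injective.under (ModuleCat.of R N)))
  have h' : Injective (ModuleCat.of R (E : Type u)) := h
  have := Module.injective_module_of_injective_object R (E : Type u)
  let ι : ModuleCat.of R N ⟶ E := Injective.ι (ModuleCat.of R N)
  have hι : Mono ι := inferInstanceAs (Mono (Injective.ι (ModuleCat.of R N)))
  exact ⟨(E : Type u), inferInstance, inferInstance, this,
    ι.hom, (ModuleCat.mono_iff_injective ι).1 hι⟩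

theorem LC.tor [IsNoetherianRing R] (i : ℕ) (h : IsTor I N) : Subsingleton (LC I N (i+1)) := by
  induction i generalizing N with
  | zero =>
    obtain ⟨E, _, _, hE, f0, hf0⟩ := exists_inj (R := R) N
    let f : N →ₗ[R] Gam I E := LinearMap.codRestrict _ f0 (fun c => by
      obtain ⟨n, hn⟩ := h c
      exact ⟨n, fun r hr => by rw [← _root_.map_smul, hn r hr, _root_.map_zero]⟩)
    have hf : Function.Injective f := fun a b hab => hf0 (congrArg Subtype.val hab)
    have hG : Injective (ModuleCat.of R (Gam I E)) := by
      have : Module.Injective R (Gam I E) := Module.Baer.injective (Gam_baer I hE)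
      exact Module.injective_object_of_injective_module R _
    have hfg : Function.Exact f (LinearMap.range f).mkQ := LinearMap.exact_map_mkQ_range f
    have hg := Submodule.mkQ_surjective (LinearMap.range f)
    refine ⟨fun a b => ?_⟩
    suffices H : ∀ a : LC I N 1, a = 0 by rw [H a, H b]
    intro z
    obtain ⟨w, rfl⟩ := LC.ex1 I f _ hf hfg hg z ((LC.inj I 0 hG).elim _ _)
    obtain ⟨v, rfl⟩ := LC.surj0 I _ hg (Gam_tor I) w
    rw [LC.delta_map]
  | succ i ih =>
    obtain ⟨E, _, _, hE, f0, hf0⟩ := exists_inj (R := R) N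
    let f : N →ₗ[R] Gam I E := LinearMap.codRestrict _ f0 (fun c => by
      obtain ⟨n, hn⟩ := h c
      exact ⟨n, fun r hr => by rw [← _root_.map_smul, hn r hr, _root_.map_zero]⟩)
    have hf : Function.Injective f := fun a b hab => hf0 (congrArg Subtype.val hab)
    have hG : Injective (ModuleCat.of R (Gam I E)) := by
      have : Module.Injective R (Gam I E) := Module.Baer.injective (Gam_baer I hE)
      exact Module.injective_object_of_injective_module R _
    have hfg : Function.Exact f (LinearMap.range f).mkQ := LinearMap.exact_map_mkQ_range f
    have hg := Submodule.mkQ_surjective (LinearMap.range f)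
    exact LC.sub1 I f _ hf hfg hg (ih (IsTor.quot I hg (Gam_tor I))) (LC.inj I _ hG)

end PartB2

open CategoryTheory Abelian Limits Opposite
section PartB3
set_option linter.unusedSectionVars false
open IsLocalRing
variable {R : Type u} [CommRing R]

/-- `u` is regular on `R/J` -/
def Reg (J : Ideal R) (u : R) : Prop := ∀ x, u * x ∈ J → x ∈ J

theorem le_sup_u (J : Ideal R) (u : R) : J ≤ J ⊔ Ideal.span {u} := le_sup_left

/-- projection -/
abbrev pru (J : Ideal R) (u : R) : (R ⧸ J) →ₗ[R] (R ⧸ (J ⊔ Ideal.span {u})) :=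
  Submodule.factor (le_sup_u J u)

theorem pru_surj (J : Ideal R) (u : R) : Function.Surjective (pru J u) :=
  Submodule.factor_surjective _

theorem mul_exact (J : Ideal R) (u : R) :
    Function.Exact (LinearMap.lsmul R (R ⧸ J) u) (pru J u) := by
  intro y
  obtain ⟨y, rfl⟩ := Submodule.Quotient.mk_surjective _ y
  change Submodule.Quotient.mk y = 0 ↔ _
  rw [Submodule.Quotient.mk_eq_zero]
  constructor
  · intro h
    obtain ⟨a, ha, b, hb, rfl⟩ := Submodule.mem_sup.1 h
    obtain ⟨c, rfl⟩ := Ideal.mem_span_singleton'.1 hb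
    refine ⟨Submodule.Quotient.mk c, ?_⟩
    change Submodule.Quotient.mk (u * c) = Submodule.Quotient.mk _
    rw [Submodule.Quotient.eq]
    have : u * c - (a + c * u) = - a := by ring
    rw [this]; exact J.neg_mem ha
  · rintro ⟨x, hx⟩
    obtain ⟨x, rfl⟩ := Submodule.Quotient.mk_surjective _ x
    change Submodule.Quotient.mk (u * x) = Submodule.Quotient.mk _ at hx
    rw [Submodule.Quotient.eq] at hx
    have : y = - (u * x - y) + x * u := by ring
    rw [this]
    exact Submodule.add_mem_sup (J.neg_mem hx) (Ideal.mem_span_singleton'.2 ⟨x, rfl⟩)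

theorem Reg.inj {J : Ideal R} {u : R} (h : Reg J u) :
    Function.Injective (LinearMap.lsmul R (R ⧸ J) u) := by
  rw [injective_iff_map_eq_zero]
  intro x hx
  obtain ⟨x, rfl⟩ := Submodule.Quotient.mk_surjective _ x
  change Submodule.Quotient.mk (u * x) = 0 at hx
  rw [Submodule.Quotient.mk_eq_zero] at hx ⊢
  exact h x hx

theorem Reg.of_inj {J : Ideal R} {u : R} (h : IsSMulRegular (R ⧸ J) u) : Reg J u := by
  intro x hx
  rw [← Submodule.Quotient.mk_eq_zero]
  apply h
  change Submodule.Quotient.mk (u * x) = u • 0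
  rw [smul_zero, Submodule.Quotient.mk_eq_zero]; exact hx

theorem dim_drop {J : Ideal R} {u : R} (h : Reg J u) :
    ringKrullDim (R ⧸ (J ⊔ Ideal.span {u})) + 1 ≤ ringKrullDim (R ⧸ J) := by
  have h1 : Ideal.Quotient.mk J u ∈ nonZeroDivisors (R ⧸ J) := by
    rw [mem_nonZeroDivisors_iff_right]
    intro x hx
    obtain ⟨x, rfl⟩ := Ideal.Quotient.mk_surjective x
    rw [← _root_.map_mul, Ideal.Quotient.eq_zero_iff_mem] at hx
    rw [Ideal.Quotient.eq_zero_iff_mem]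
    exact h x (by rwa [mul_comm])
  have h2 := ringKrullDim_quotient_succ_le_of_nonZeroDivisor h1
  have e := DoubleQuot.quotQuotEquivQuotSup J (Ideal.span {u})
  rw [← ringKrullDim_eq_of_ringEquiv e, Ideal.map_span, Set.image_singleton]
  exact h2

variable [IsNoetherianRing R] [IsLocalRing R]

theorem exists_reg {J : Ideal R}
    (h : ∀ x, (∀ r ∈ maximalIdeal R, r * x ∈ J) → x ∈ J) :
    ∃ u ∈ maximalIdeal R, Reg J u := by
  have : Subsingleton ((R ⧸ maximalIdeal R) →ₗ[R] (R ⧸ J)) := by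
    refine ⟨fun f g => ?_⟩
    suffices H : ∀ f : (R ⧸ maximalIdeal R) →ₗ[R] (R ⧸ J), f = 0 by rw [H f, H g]
    intro f
    ext
    change f (Submodule.Quotient.mk 1) = 0
    obtain ⟨x, hx⟩ := Submodule.Quotient.mk_surjective _ (f (Submodule.Quotient.mk 1))
    rw [← hx, Submodule.Quotient.mk_eq_zero]
    refine h x fun r hr => ?_
    rw [← Submodule.Quotient.mk_eq_zero]
    change r • (Submodule.Quotient.mk x : R ⧸ J) = 0
    rw [hx, ← _root_.map_smul]
    have : r • (Submodule.Quotient.mk 1 : R ⧸ maximalIdeal R) = 0 := by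
      change Submodule.Quotient.mk (r * 1) = 0
      rw [Submodule.Quotient.mk_eq_zero]; simpa using hr
    rw [this, _root_.map_zero]
  obtain ⟨r, hr, hr'⟩ := IsSMulRegular.subsingleton_linearMap_iff.1 this
  exact ⟨r, by rwa [Ideal.annihilator_quotient] at hr, Reg.of_inj hr'⟩

local notation "𝔪" => maximalIdeal R

/-- saturation -/
def sat (J : Ideal R) : Ideal R := Submodule.comap (Submodule.mkQ J) (Gam 𝔪 (R ⧸ J))

theorem le_sat (J : Ideal R) : J ≤ sat J := by
  intro x hx
  change (Submodule.Quotient.mk x : R ⧸ J) ∈ Gam 𝔪 (R ⧸ J)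
  rw [(Submodule.Quotient.mk_eq_zero _).2 hx]
  exact Submodule.zero_mem _

theorem mem_sat (J : Ideal R) (x : R) : x ∈ sat J ↔ ∃ n : ℕ, ∀ r ∈ 𝔪 ^ n, r * x ∈ J := by
  change (∃ n : ℕ, ∀ r ∈ 𝔪 ^ n, r • (Submodule.Quotient.mk x : R ⧸ J) = 0) ↔ _
  refine exists_congr fun n => forall₂_congr fun r _ => ?_
  change (Submodule.Quotient.mk (r * x) : R ⧸ J) = 0 ↔ _
  rw [Submodule.Quotient.mk_eq_zero]

theorem sat_exact (J : Ideal R) : Function.Exact (Gam 𝔪 (R ⧸ J)).subtype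
    (Submodule.factor (le_sat J) : (R ⧸ J) →ₗ[R] (R ⧸ sat J)) := by
  intro y
  obtain ⟨y, rfl⟩ := Submodule.Quotient.mk_surjective _ y
  change Submodule.Quotient.mk y = 0 ↔ _
  rw [Submodule.Quotient.mk_eq_zero]
  constructor
  · intro h
    exact ⟨⟨_, h⟩, rfl⟩
  · rintro ⟨⟨x, hx⟩, rfl⟩
    change y ∈ Submodule.comap (Submodule.mkQ J) (Gam 𝔪 (R ⧸ J))
    assumption

theorem sat_prop (J : Ideal R) (x : R) (h : ∀ r ∈ 𝔪, r * x ∈ sat J) : x ∈ sat J := by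
  obtain ⟨n, hn⟩ := IsTor.unif 𝔪 (Gam_tor 𝔪 (N := R ⧸ J)) ⊤ (IsNoetherian.noetherian _)
  rw [mem_sat]
  refine ⟨n + 1, ?_⟩
  have : 𝔪 ^ (n+1) * Ideal.span {x} ≤ J := by
    rw [pow_succ, mul_assoc, Ideal.mul_le]
    intro r hr s hs
    have hs' : s ∈ sat J := by
      have : 𝔪 * Ideal.span {x} ≤ sat J := by
        rw [Ideal.mul_le]
        intro a ha b hb
        obtain ⟨c, rfl⟩ := Ideal.mem_span_singleton'.1 hb
        have : a * (c * x) = c * (a * x) := by ring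
        rw [this]
        exact Ideal.mul_mem_left _ _ (h a ha)
      exact this hs
    have := hn r hr ⟨Submodule.Quotient.mk s, hs'⟩ trivial
    have := congrArg Subtype.val this
    change (Submodule.Quotient.mk (r * s) : R ⧸ J) = 0 at this
    rwa [Submodule.Quotient.mk_eq_zero] at this
  intro r hr
  exact this (Ideal.mul_mem_mul hr (Ideal.mem_span_singleton_self x))

theorem nat_dim {a : WithBot ℕ∞} {n : ℕ} (h : a + 1 ≤ ((n + 1 : ℕ) : WithBot ℕ∞)) :
    a ≤ (n : WithBot ℕ∞) := by
  induction a with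
  | bot => exact bot_le
  | coe a =>
    have h' : ((a + 1 : ℕ∞) : WithBot ℕ∞) ≤ (((n + 1 : ℕ) : ℕ∞) : WithBot ℕ∞) := h
    rw [WithBot.coe_le_coe] at h'
    have h'' : a + 1 ≤ (n : ℕ∞) + 1 := by exact_mod_cast h'
    have := (ENat.add_le_add_iff_right (by simp : (1 : ℕ∞) ≠ ⊤)).1 h''
    exact WithBot.coe_le_coe.2 this

theorem dim_drop' {J : Ideal R} {u : R} (h : Reg J u) {n : ℕ}
    (hn : ringKrullDim (R ⧸ J) ≤ ((n + 1 : ℕ) : WithBot ℕ∞)) :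
    ringKrullDim (R ⧸ (J ⊔ Ideal.span {u})) ≤ (n : WithBot ℕ∞) :=
  nat_dim ((dim_drop h).trans hn)

theorem dim_zero {J : Ideal R} {u : R} (h : Reg J u) (hJ : J ≤ 𝔪) (hu : u ∈ 𝔪)
    (hn : ringKrullDim (R ⧸ J) ≤ ((0 : ℕ) : WithBot ℕ∞)) : False := by
  have h1 := (dim_drop h).trans hn
  have hne : J ⊔ Ideal.span {u} ≠ ⊤ := by
    intro h
    have : J ⊔ Ideal.span {u} ≤ 𝔪 := sup_le hJ ((Ideal.span_singleton_le_iff_mem _).2 hu)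
    rw [h] at this
    exact (maximalIdeal.isMaximal R).ne_top (top_le_iff.1 this)
  have : Nontrivial (R ⧸ (J ⊔ Ideal.span {u})) := Ideal.Quotient.nontrivial_iff.2 hne
  have h2 : 0 ≤ ringKrullDim (R ⧸ (J ⊔ Ideal.span {u})) := ringKrullDim_nonneg_of_nontrivial
  have h3 : (0 : WithBot ℕ∞) + 1 ≤ ((0:ℕ) : WithBot ℕ∞) := (add_le_add_left h2 1).trans h1
  have h4 : ((1 : ℕ∞) : WithBot ℕ∞) ≤ ((0 : ℕ∞) : WithBot ℕ∞) := by simpa using h3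
  rw [WithBot.coe_le_coe] at h4
  simp at h4

theorem dim_sat {J : Ideal R} {n : WithBot ℕ∞} (hn : ringKrullDim (R ⧸ J) ≤ n) :
    ringKrullDim (R ⧸ sat J) ≤ n :=
  (ringKrullDim_le_of_surjective (Ideal.Quotient.factor (le_sat J))
    (Ideal.Quotient.factor_surjective _)).trans hn

theorem sat_cases (J : Ideal R) : sat J = ⊤ ∨ (sat J ≤ 𝔪 ∧ ∃ u ∈ 𝔪, Reg (sat J) u) := by
  by_cases h : sat J = ⊤
  · exact Or.inl h
  · exact Or.inr ⟨le_maximalIdeal h, exists_reg (sat_prop J)⟩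

theorem LC_dim (n : ℕ) : ∀ (J : Ideal R), ringKrullDim (R ⧸ J) ≤ (n : WithBot ℕ∞) →
    ∀ i, n < i → Subsingleton (LC 𝔪 (R ⧸ J) i) := by
  induction n with
  | zero =>
    intro J hJ i hi
    obtain ⟨i, rfl⟩ : ∃ j, i = j + 1 := ⟨i - 1, by omega⟩
    rcases sat_cases J with h | ⟨h, u, hu, hr⟩
    · have : Subsingleton (R ⧸ sat J) := by rw [h]; exact Ideal.Quotient.subsingleton_iff.2 rfl
      exact LC.sub2 𝔪 _ _ (Subtype.val_injective) (sat_exact J) (Submodule.factor_surjective _)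
        (LC.tor 𝔪 i (Gam_tor 𝔪)) (LC.sub_of_sub 𝔪)
    · exact (dim_zero hr h hu (dim_sat hJ)).elim
  | succ n ih =>
    intro J hJ i hi
    obtain ⟨i, rfl⟩ : ∃ j, i = j + 1 := ⟨i - 1, by omega⟩
    refine LC.sub2 𝔪 _ _ (Subtype.val_injective) (sat_exact J) (Submodule.factor_surjective _)
        (LC.tor 𝔪 i (Gam_tor 𝔪)) ?_
    rcases sat_cases J with h | ⟨h, u, hu, hr⟩
    · have : Subsingleton (R ⧸ sat J) := by rw [h]; exact Ideal.Quotient.subsingleton_iff.2 rfl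
      exact LC.sub_of_sub 𝔪
    · refine LC.sub_of_inj 𝔪 hu fun z hz => ?_
      have h1 := ih _ (dim_drop' hr (dim_sat hJ)) i (by omega)
      rw [← LC.map_lsmul] at hz
      obtain ⟨w, rfl⟩ := LC.ex1 𝔪 _ _ hr.inj (mul_exact _ u) (pru_surj _ u) z hz
      rw [h1.elim w 0, _root_.map_zero]

theorem dim_zero_pow {J : Ideal R} (hJ : ringKrullDim (R ⧸ J) ≤ ((0:ℕ) : WithBot ℕ∞)) :
    ∃ k, 𝔪 ^ k ≤ J := by
  rcases sat_cases J with h | ⟨h, u, hu, hr⟩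
  · have : (1 : R) ∈ sat J := by rw [h]; trivial
    obtain ⟨n, hn⟩ := (mem_sat _ _).1 this
    exact ⟨n, fun r hr => by simpa using hn r hr⟩
  · exact (dim_zero hr h hu (dim_sat hJ)).elim

theorem LC_fg {n : ℕ} (hR : ringKrullDim R ≤ (n : WithBot ℕ∞)) (N : Type u) [AddCommGroup N]
    [Module R N] (hN : Module.Finite R N) (i : ℕ) (hi : n < i) : Subsingleton (LC 𝔪 N i) := by
  induction hN using IsNoetherianRing.induction_on_isQuotientEquivQuotientPrime R with
  | subsingleton N => exact LC.sub_of_sub 𝔪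
  | quotient N p e =>
    exact LC.sub_iso 𝔪 e.symm (LC_dim n p.1 ((ringKrullDim_quotient_le _).trans hR) i hi)
  | exact N₁ N₂ N₃ f g hf hg hfg h1 h3 => exact LC.sub2 𝔪 f g hf hfg hg h1 h3

/-- CM quotient -/
structure CMQ (n : ℕ) (J : Ideal R) : Prop where
  le : J ≤ 𝔪
  dim : ringKrullDim (R ⧸ J) ≤ (n : WithBot ℕ∞)
  ext : ∀ j < n, EZ R j (R ⧸ 𝔪) (R ⧸ J)

theorem CMQ.step {n : ℕ} {J : Ideal R} (h : CMQ (n+1) J) {u : R} (hu : u ∈ 𝔪) (hr : Reg J u) :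
    CMQ n (J ⊔ Ideal.span {u}) :=
  ⟨sup_le h.le ((Ideal.span_singleton_le_iff_mem _).2 hu), dim_drop' hr h.dim, fun j hj =>
    EZ.cov3 _ _ hr.inj (mul_exact _ u) (pru_surj _ u) (h.ext j (by omega)) (h.ext (j+1) (by omega))⟩

theorem CMQ.ex {n : ℕ} {J : Ideal R} (h : CMQ (n+1) J) : ∃ u ∈ 𝔪, Reg J u := by
  apply exists_reg
  intro x hx
  have h0 := EZ.zero_iff.1 (h.ext 0 (by omega)) (Submodule.liftQ 𝔪
    (LinearMap.toSpanSingleton R (R ⧸ J) (Submodule.Quotient.mk x)) (by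
      intro r hr
      rw [LinearMap.mem_ker, LinearMap.toSpanSingleton_apply]
      exact (Submodule.Quotient.mk_eq_zero _).2 (hx r hr)))
  have := congrArg (fun f => f (Submodule.Quotient.mk 1)) h0
  simp only [LinearMap.zero_apply] at this
  rw [← Submodule.Quotient.mk_eq_zero, ← this]
  exact ((Submodule.liftQ_apply _ _ _).trans (by simp)).symm

theorem CMQ.lc {n : ℕ} {J : Ideal R} (h : CMQ n J) (j : ℕ) (hj : j ≠ n) :
    Subsingleton (LC 𝔪 (R ⧸ J) j) := by
  rcases Nat.lt_or_gt_of_ne hj with hlt | hgt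
  · induction n generalizing J j with
    | zero => omega
    | succ n ih =>
      obtain ⟨u, hu, hr⟩ := h.ex
      refine LC.sub_of_inj 𝔪 hu fun z hz => ?_
      rw [← LC.map_lsmul] at hz
      cases j with
      | zero => exact LC.map_inj0 𝔪 _ hr.inj z hz
      | succ j =>
        have h1 := ih (h.step hu hr) j (by omega) (by omega)
        obtain ⟨w, rfl⟩ := LC.ex1 𝔪 _ _ hr.inj (mul_exact _ u) (pru_surj _ u) z hz
        rw [h1.elim w 0, _root_.map_zero]
  · exact LC_dim n J h.dim j hgt

/-- The inductive structure of top local cohomology. -/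
def Good (R : Type u) [CommRing R] [IsLocalRing R] : ℕ → Ideal R → (H : Type u) →
    [AddCommGroup H] → [Module R H] → Prop
  | 0, J, H, _, _ => J ≤ maximalIdeal R ∧ (∃ k, maximalIdeal R ^ k ≤ J) ∧
      (∀ r ∈ J, ∀ h : H, r • h = 0) ∧ Nonempty ((R ⧸ J) ≃ₗ[R] H)
  | d + 1, J, H, _, _ => J ≤ maximalIdeal R ∧ (∀ r ∈ J, ∀ h : H, r • h = 0) ∧
      (∃ u ∈ maximalIdeal R, Reg J u) ∧
      ∀ u ∈ maximalIdeal R, Reg J u → (∀ h : H, ∃ h', u • h' = h) ∧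
        ∃ (H' : Type u) (_ : AddCommGroup H') (_ : Module R H') (j : H' →ₗ[R] H),
          Function.Injective j ∧ (∀ h, u • h = 0 ↔ ∃ x, j x = h) ∧
          Good R d (J ⊔ Ideal.span {u}) H'

theorem CMQ.good {n : ℕ} {J : Ideal R} (h : CMQ n J) : Good R n J (LC 𝔪 (R ⧸ J) n) := by
  have hk : ∀ (n : ℕ), ∀ r ∈ J, ∀ h : LC 𝔪 (R ⧸ J) n, r • h = 0 := by
    intro n r hr h
    refine LC.smul_zero_of 𝔪 r (fun a => ?_) h
    obtain ⟨a, rfl⟩ := Submodule.Quotient.mk_surjective _ a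
    exact (Submodule.Quotient.mk_eq_zero _).2 (J.mul_mem_right _ hr)
  induction n generalizing J with
  | zero =>
    obtain ⟨k, hk'⟩ := dim_zero_pow h.dim
    refine ⟨h.le, ⟨k, hk'⟩, hk 0, ⟨(LinearEquiv.ofBijective (LC.ev 𝔪 (R ⧸ J))
      ⟨LC.ev_inj 𝔪, fun y => ?_⟩).symm⟩⟩
    refine LC.ev_surj 𝔪 y k fun r hr => ?_
    obtain ⟨a, rfl⟩ := Submodule.Quotient.mk_surjective _ y
    exact (Submodule.Quotient.mk_eq_zero _).2 (J.mul_mem_right _ (hk' hr))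
  | succ n ih =>
    refine ⟨h.le, hk (n+1), h.ex, fun u hu hr => ⟨fun z => ?_, LC 𝔪 (R ⧸ (J ⊔ Ideal.span {u})) n,
      inferInstance, inferInstance, LC.delta 𝔪 _ _ hr.inj (mul_exact _ u) (pru_surj _ u) n,
      ?_, fun z => ⟨fun hz => ?_, ?_⟩, ih (h.step hu hr) ?_⟩⟩
    · obtain ⟨w, hw⟩ := LC.ex2 𝔪 _ _ hr.inj (mul_exact _ u) (pru_surj _ u) z
        (((h.step hu hr).lc (n+1) (by omega)).elim _ _)
      exact ⟨w, by rw [← hw, LC.map_lsmul]⟩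
    · rw [injective_iff_map_eq_zero]
      intro z hz
      obtain ⟨w, rfl⟩ := LC.ex3 𝔪 _ _ hr.inj (mul_exact _ u) (pru_surj _ u) z hz
      rw [(h.lc n (by omega)).elim w 0, _root_.map_zero]
    · rw [← LC.map_lsmul] at hz
      exact LC.ex1 𝔪 _ _ hr.inj (mul_exact _ u) (pru_surj _ u) z hz
    · rintro ⟨x, rfl⟩
      rw [← LC.map_lsmul]
      exact LC.map_delta 𝔪 _ _ hr.inj (mul_exact _ u) (pru_surj _ u) x
    · intro n r hr h
      refine LC.smul_zero_of 𝔪 r (fun a => ?_) h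
      obtain ⟨a, rfl⟩ := Submodule.Quotient.mk_surjective _ a
      exact (Submodule.Quotient.mk_eq_zero _).2 (Ideal.mul_mem_right _ _ hr)

end PartB3

open CategoryTheory Abelian Limits Opposite
section PartC1
open IsLocalRing
set_option linter.unusedSectionVars false
variable {R : Type u} [CommRing R]
variable {A B X Y L : Type u} [AddCommGroup A] [Module R A] [AddCommGroup B] [Module R B]
  [AddCommGroup X] [Module R X] [AddCommGroup Y] [Module R Y] [AddCommGroup L] [Module R L]

theorem descend (p : A →ₗ[R] B) (hp : Function.Surjective p) (f : A →ₗ[R] X)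
    (h : ∀ a, p a = 0 → f a = 0) : ∃ f' : B →ₗ[R] X, ∀ a, f' (p a) = f a := by
  refine ⟨(Submodule.liftQ (LinearMap.ker p) f (fun a ha => h a ha)) ∘ₗ
    (p.quotKerEquivOfSurjective hp).symm.toLinearMap, fun a => ?_⟩
  have : (p.quotKerEquivOfSurjective hp).symm (p a) = Submodule.Quotient.mk a := by
    rw [LinearEquiv.symm_apply_eq]; rfl
  simp only [LinearMap.comp_apply, LinearEquiv.coe_coe, this]
  exact Submodule.liftQ_apply _ _ _

theorem equiv_of_ker (p : A →ₗ[R] B) (hp : Function.Surjective p) (q : A →ₗ[R] X)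
    (hq : Function.Surjective q) (h : ∀ a, p a = 0 ↔ q a = 0) : Nonempty (B ≃ₗ[R] X) := by
  have : LinearMap.ker p = LinearMap.ker q := by ext a; exact h a
  exact ⟨(p.quotKerEquivOfSurjective hp).symm ≪≫ₗ Submodule.quotEquivOfEq _ _ this ≪≫ₗ
    q.quotKerEquivOfSurjective hq⟩

/-- killed by `J` -/
def Kil (J : Ideal R) (X : Type u) [AddCommGroup X] [Module R X] : Prop :=
  ∀ r ∈ J, ∀ x : X, r • x = 0

theorem Kil.quot (J : Ideal R) : Kil J (R ⧸ J) := by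
  intro r hr x
  obtain ⟨x, rfl⟩ := Submodule.Quotient.mk_surjective _ x
  exact (Submodule.Quotient.mk_eq_zero _).2 (J.mul_mem_right _ hr)

theorem Kil.pi (J : Ideal R) (b : ℕ) : Kil J (Fin b → R ⧸ J) := by
  intro r hr x
  ext i
  exact Kil.quot J r hr (x i)

theorem Kil.of_inj {J : Ideal R} (h : Kil J X) (f : Y →ₗ[R] X) (hf : Function.Injective f) :
    Kil J Y := by
  intro r hr y
  apply hf
  rw [_root_.map_smul, h r hr, _root_.map_zero]

theorem Kil.of_surj {J : Ideal R} (h : Kil J X) (f : X →ₗ[R] Y) (hf : Function.Surjective f) :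
    Kil J Y := by
  intro r hr y
  obtain ⟨x, rfl⟩ := hf y
  rw [← _root_.map_smul, h r hr, _root_.map_zero]

/-- basis vectors -/
noncomputable def bv (J : Ideal R) {b : ℕ} (i : Fin b) : Fin b → R ⧸ J :=
  Pi.single i (Submodule.Quotient.mk 1)

theorem bv_sum (J : Ideal R) {b : ℕ} (x : Fin b → R ⧸ J) (r : Fin b → R)
    (hr : ∀ i, Submodule.Quotient.mk (r i) = x i) : x = ∑ i, r i • bv J i := by
  funext j
  rw [Finset.sum_apply, Finset.sum_eq_single j]
  · rw [← hr j, Pi.smul_apply, bv, Pi.single_eq_same, ← Submodule.Quotient.mk_smul]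
    simp
  · intro i _ hi
    rw [Pi.smul_apply, bv, Pi.single_eq_of_ne hi.symm, smul_zero]
  · simp

theorem bv_ext (J : Ideal R) {b : ℕ} {f g : (Fin b → R ⧸ J) →ₗ[R] X}
    (h : ∀ i, f (bv J i) = g (bv J i)) : f = g := by
  refine LinearMap.ext fun x => ?_
  choose r hr using fun i => Submodule.Quotient.mk_surjective J (x i)
  rw [bv_sum J x r hr, _root_.map_sum, _root_.map_sum]
  exact Finset.sum_congr rfl fun i _ => by rw [_root_.map_smul, _root_.map_smul, h]

/-- map given by images of basis vectors -/
noncomputable def fl (J : Ideal R) (hX : Kil J X) {b : ℕ} (v : Fin b → X) :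
    (Fin b → R ⧸ J) →ₗ[R] X :=
  ∑ i, (Submodule.liftQ J (LinearMap.toSpanSingleton R X (v i)) (by
    intro r hr; simpa using hX r hr (v i))) ∘ₗ LinearMap.proj i

theorem fl_bv (J : Ideal R) (hX : Kil J X) {b : ℕ} (v : Fin b → X) (i : Fin b) :
    fl J hX v (bv J i) = v i := by
  rw [fl, LinearMap.sum_apply, Finset.sum_eq_single i]
  · rw [LinearMap.comp_apply, LinearMap.proj_apply, bv, Pi.single_eq_same]
    exact (Submodule.liftQ_apply _ _ _).trans (by simp)
  · intro j _ hj
    rw [LinearMap.comp_apply, LinearMap.proj_apply, bv, Pi.single_eq_of_ne hj, _root_.map_zero]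
  · simp

theorem fl_lift (J : Ideal R) (hX : Kil J X) (p : X →ₗ[R] Y) (hp : Function.Surjective p) {b : ℕ}
    (f : (Fin b → R ⧸ J) →ₗ[R] Y) : ∃ g : (Fin b → R ⧸ J) →ₗ[R] X, ∀ x, p (g x) = f x := by
  choose v hv using fun i => hp (f (bv J i))
  refine ⟨fl J hX v, fun x => ?_⟩
  have : p ∘ₗ fl J hX v = f := bv_ext J fun i => by rw [LinearMap.comp_apply, fl_bv, hv]
  exact LinearMap.congr_fun this x

theorem Reg.pi {J : Ideal R} {u : R} (h : Reg J u) {b : ℕ} (x : Fin b → R ⧸ J) (hx : u • x = 0) :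
    x = 0 := by
  funext i
  exact (injective_iff_map_eq_zero _).1 h.inj _ (congrFun hx i)

theorem Reg.mul {J : Ideal R} {u v : R} (hu : Reg J u) (hv : Reg J v) : Reg J (u * v) :=
  fun x hx => hv x (hu _ (by rwa [← mul_assoc]))

theorem Reg.one (J : Ideal R) : Reg J 1 := fun x hx => by simpa using hx

theorem Reg.pow {J : Ideal R} {u : R} (hu : Reg J u) (n : ℕ) : Reg J (u ^ n) := by
  induction n with
  | zero => simpa using Reg.one J
  | succ n ih => rw [pow_succ]; exact ih.mul hu

/-- base change of free modules -/
noncomputable def qb (J : Ideal R) (u : R) (b : ℕ) :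
    (Fin b → R ⧸ J) →ₗ[R] (Fin b → R ⧸ (J ⊔ Ideal.span {u})) :=
  LinearMap.pi fun i => pru J u ∘ₗ LinearMap.proj i

theorem qb_surj (J : Ideal R) (u : R) (b : ℕ) : Function.Surjective (qb J u b) := by
  intro y
  choose x hx using fun i => pru_surj J u (y i)
  exact ⟨x, funext hx⟩

theorem qb_ker (J : Ideal R) (u : R) (b : ℕ) (x : Fin b → R ⧸ J) :
    qb J u b x = 0 ↔ ∃ y, x = u • y := by
  constructor
  · intro h
    choose y hy using fun i => (mul_exact J u (x i)).1 (congrFun h i)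
    exact ⟨y, funext fun i => (hy i).symm⟩
  · rintro ⟨y, rfl⟩
    funext i
    exact (mul_exact J u _).2 ⟨y i, rfl⟩

/-- projective dimension over `R/J` at most `n` -/
def PdLE (J : Ideal R) : ℕ → (L : Type u) → [AddCommGroup L] → [Module R L] → Prop
  | 0, L, _, _ => ∃ b : ℕ, Nonempty (L ≃ₗ[R] (Fin b → R ⧸ J))
  | n + 1, L, _, _ => ∃ (b : ℕ) (f : (Fin b → R ⧸ J) →ₗ[R] L), Function.Surjective f ∧
      PdLE J n (LinearMap.ker f)

theorem PdLE.iso {J : Ideal R} {n : ℕ} (h : PdLE J n L) (e : L ≃ₗ[R] Y) : PdLE J n Y := by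
  induction n generalizing L Y with
  | zero =>
    obtain ⟨b, ⟨f⟩⟩ := h
    exact ⟨b, ⟨e.symm ≪≫ₗ f⟩⟩
  | succ n ih =>
    obtain ⟨b, f, hf, hk⟩ := h
    refine ⟨b, e.toLinearMap ∘ₗ f, e.surjective.comp hf, ih hk (LinearEquiv.ofEq _ _ ?_)⟩
    rw [LinearEquiv.ker_comp]

theorem PdLE.kil {J : Ideal R} {n : ℕ} (h : PdLE J n L) : Kil J L := by
  cases n with
  | zero =>
    obtain ⟨b, ⟨f⟩⟩ := h
    exact (Kil.pi J b).of_inj f.toLinearMap f.injective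
  | succ n =>
    obtain ⟨b, f, hf, hk⟩ := h
    exact (Kil.pi J b).of_surj f hf

theorem PdLE.baseChange {J : Ideal R} {u : R} (hu : Reg J u) {n : ℕ} (h : PdLE J n Y)
    (huY : ∀ y : Y, u • y = 0 → y = 0) (q : Y →ₗ[R] X) (hq : Function.Surjective q)
    (hk : ∀ y, q y = 0 ↔ ∃ y', y = u • y') : PdLE (J ⊔ Ideal.span {u}) n X := by
  induction n generalizing Y X with
  | zero =>
    obtain ⟨b, ⟨f⟩⟩ := h
    refine ⟨b, equiv_of_ker (q ∘ₗ f.symm.toLinearMap) (hq.comp f.symm.surjective) (qb J u b)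
      (qb_surj J u b) fun a => ?_⟩
    rw [qb_ker, LinearMap.comp_apply, LinearEquiv.coe_coe, hk]
    constructor
    · rintro ⟨y', hy⟩
      exact ⟨f y', by rw [← _root_.map_smul, ← hy, f.apply_symm_apply]⟩
    · rintro ⟨y', rfl⟩
      exact ⟨f.symm y', by rw [_root_.map_smul]⟩
  | succ n ih =>
    obtain ⟨b, f, hf, hK⟩ := h
    obtain ⟨g, hg⟩ := descend (qb J u b) (qb_surj J u b) (q ∘ₗ f) (fun a ha => by
      obtain ⟨y, rfl⟩ := (qb_ker J u b a).1 ha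
      rw [LinearMap.comp_apply, hk]
      exact ⟨f y, _root_.map_smul f u y⟩)
    have hgs : Function.Surjective g := by
      intro x
      obtain ⟨y, rfl⟩ := hq x
      obtain ⟨a, rfl⟩ := hf y
      exact ⟨qb J u b a, hg a⟩
    refine ⟨b, g, hgs, ih hK (fun y hy => ?_)
      (LinearMap.codRestrict (LinearMap.ker g) (qb J u b ∘ₗ (LinearMap.ker f).subtype) ?_) ?_ ?_⟩
    · exact Subtype.ext (hu.pi _ (congrArg Subtype.val hy))
    · rintro ⟨k, hk'⟩
      rw [LinearMap.mem_ker] at hk' ⊢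
      rw [LinearMap.comp_apply, hg, LinearMap.comp_apply]
      change q (f k) = 0
      rw [hk', _root_.map_zero]
    · rintro ⟨x, hx⟩
      obtain ⟨x, rfl⟩ := qb_surj J u b x
      rw [LinearMap.mem_ker, hg, LinearMap.comp_apply, hk] at hx
      obtain ⟨y, hy⟩ := hx
      obtain ⟨a, rfl⟩ := hf y
      refine ⟨⟨x - u • a, ?_⟩, Subtype.ext ?_⟩
      · rw [LinearMap.mem_ker, _root_.map_sub, _root_.map_smul, hy, sub_self]
      · change qb J u b (x - u • a) = qb J u b x
        rw [_root_.map_sub, (qb_ker J u b _).2 ⟨a, rfl⟩, sub_zero]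
    · rintro ⟨k, hk'⟩
      constructor
      · intro h
        obtain ⟨x, rfl⟩ := (qb_ker J u b k).1 (congrArg Subtype.val h)
        rw [LinearMap.mem_ker, _root_.map_smul] at hk'
        exact ⟨⟨x, huY _ hk'⟩, rfl⟩
      · rintro ⟨y', hy'⟩
        refine Subtype.ext ((qb_ker J u b k).2 ⟨y'.1, congrArg Subtype.val hy'⟩)

/-- split up to a regular element -/
def Split (J : Ideal R) (L : Type u) [AddCommGroup L] [Module R L] : Prop :=
  ∃ s, Reg J s ∧ ∃ (c : ℕ) (α : L →ₗ[R] (Fin c → R ⧸ J)) (β : (Fin c → R ⧸ J) →ₗ[R] L),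
    ∀ x, β (α x) = s • x

variable [IsNoetherianRing R]

theorem homs_finite [Module.Finite R Y] [Module.Finite R X] : Module.Finite R (Y →ₗ[R] X) := by
  infer_instance

theorem Split.retract {J : Ideal R} [Module.Finite R Y] (h : Split J Y) {b : ℕ}
    (ι : Y →ₗ[R] (Fin b → R ⧸ J)) (hι : Function.Injective ι) :
    ∃ u, Reg J u ∧ ∃ ρ : (Fin b → R ⧸ J) →ₗ[R] Y, ∀ y, ρ (ι y) = u • y := by
  obtain ⟨s, hs, c, α, β, hβ⟩ := h
  let S : Submodule R (Y →ₗ[R] (R ⧸ J)) := LinearMap.range (LinearMap.lcomp R (R ⧸ J) ι)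
  have hfin : Module.Finite R (Y →ₗ[R] (R ⧸ J)) := homs_finite
  have h0 : Subsingleton (((Y →ₗ[R] (R ⧸ J)) ⧸ S) →ₗ[R] (R ⧸ J)) := by
    refine ⟨fun f g => ?_⟩
    suffices H : ∀ f : ((Y →ₗ[R] (R ⧸ J)) ⧸ S) →ₗ[R] (R ⧸ J), f = 0 by rw [H f, H g]
    intro f
    let φ := f ∘ₗ S.mkQ
    have hφ0 : ∀ χ : (Fin b → R ⧸ J) →ₗ[R] (R ⧸ J), φ (χ ∘ₗ ι) = 0 := by
      intro χ
      change f (S.mkQ _) = 0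
      have : S.mkQ (χ ∘ₗ ι) = 0 := (Submodule.Quotient.mk_eq_zero _).2 ⟨χ, rfl⟩
      rw [this, _root_.map_zero]
    let v : Fin c → R ⧸ J := fun i => φ (LinearMap.proj i ∘ₗ α)
    have hv : ∀ ψ : (Fin c → R ⧸ J) →ₗ[R] (R ⧸ J), φ (ψ ∘ₗ α) = ψ v := by
      intro ψ
      choose r hr using fun i => Submodule.Quotient.mk_surjective J (ψ (bv J i))
      have e : ψ = ∑ i, r i • LinearMap.proj i := by
        apply bv_ext
        intro k
        rw [LinearMap.sum_apply, Finset.sum_eq_single k]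
        · rw [LinearMap.smul_apply, LinearMap.proj_apply, bv, Pi.single_eq_same,
            ← Submodule.Quotient.mk_smul]
          have := hr k
          rw [bv] at this
          rw [← this]; simp
        · intro i _ hi
          rw [LinearMap.smul_apply, LinearMap.proj_apply, bv, Pi.single_eq_of_ne hi, smul_zero]
        · simp
      have e2 : ψ ∘ₗ α = ∑ i, r i • (LinearMap.proj i ∘ₗ α) := by
        rw [e]; ext x; simp
      rw [e2, _root_.map_sum, e, LinearMap.sum_apply]
      refine Finset.sum_congr rfl fun i _ => ?_
      rw [_root_.map_smul]; rfl
    have hy : ∀ χ : Y →ₗ[R] (R ⧸ J), χ (β v) = s • φ χ := by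
      intro χ
      have := hv (χ ∘ₗ β)
      change φ ((χ ∘ₗ β) ∘ₗ α) = χ (β v) at this
      rw [← this, ← _root_.map_smul]
      congr 1
      ext y
      simp [hβ]
    have hy0 : β v = 0 := by
      apply hι
      rw [_root_.map_zero]
      funext i
      have := hy (LinearMap.proj i ∘ₗ ι)
      rw [hφ0, smul_zero] at this
      exact this
    have hφ : φ = 0 := by
      ext1 χ
      have := hy χ
      rw [hy0, _root_.map_zero] at this
      exact (injective_iff_map_eq_zero _).1 hs.inj _ this.symm
    refine LinearMap.ext fun z => ?_
    obtain ⟨z, rfl⟩ := Submodule.mkQ_surjective S z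
    exact LinearMap.congr_fun hφ z
  obtain ⟨t, ht, htr⟩ := IsSMulRegular.subsingleton_linearMap_iff.1 h0
  have htr := Reg.of_inj htr
  have hex : ∀ χ : Y →ₗ[R] (R ⧸ J), ∃ χ' : (Fin b → R ⧸ J) →ₗ[R] (R ⧸ J), χ' ∘ₗ ι = t • χ := by
    intro χ
    have := Module.mem_annihilator.1 ht (S.mkQ χ)
    rw [← _root_.map_smul] at this
    exact (Submodule.Quotient.mk_eq_zero _).1 this
  choose α' hα' using fun i => hex (LinearMap.proj i ∘ₗ α)
  refine ⟨t * s, htr.mul hs, β ∘ₗ LinearMap.pi α', fun y => ?_⟩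
  have : LinearMap.pi α' (ι y) = t • α y := by
    funext i
    exact LinearMap.congr_fun (hα' i) y
  rw [LinearMap.comp_apply, this, _root_.map_smul, hβ, smul_smul]

theorem PdLE.split {J : Ideal R} {n : ℕ} (h : PdLE J n L) : Split J L := by
  induction n generalizing L with
  | zero =>
    obtain ⟨b, ⟨f⟩⟩ := h
    exact ⟨1, Reg.one J, b, f.toLinearMap, f.symm.toLinearMap, fun x => by simp⟩
  | succ n ih =>
    obtain ⟨b, f, hf, hK⟩ := h
    obtain ⟨u, hu, ρ, hρ⟩ := (ih hK).retract (LinearMap.ker f).subtype Subtype.val_injective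
    obtain ⟨σ, hσ⟩ := descend f hf
      (u • LinearMap.id - (LinearMap.ker f).subtype ∘ₗ ρ) (fun a ha => by
        have := hρ ⟨a, ha⟩
        have := congrArg Subtype.val this
        simp only [LinearMap.sub_apply, LinearMap.smul_apply, LinearMap.id_apply,
          LinearMap.comp_apply, Submodule.subtype_apply] at this ⊢
        rw [this]
        exact sub_self _)
    refine ⟨u, hu, b, σ, f, fun x => ?_⟩
    obtain ⟨a, rfl⟩ := hf x
    rw [hσ]
    simp only [LinearMap.sub_apply, LinearMap.smul_apply, LinearMap.id_apply,
          LinearMap.comp_apply, Submodule.subtype_apply, _root_.map_sub, _root_.map_smul]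
    rw [LinearMap.mem_ker.1 (ρ a).2, sub_zero]

end PartC1

open CategoryTheory Abelian Limits Opposite
section PartC2
open IsLocalRing
set_option linter.unusedSectionVars false
variable {R : Type u} [CommRing R] [IsLocalRing R]
variable {X Y L H : Type u} 
  [AddCommGroup X] [Module R X] [AddCommGroup Y] [Module R Y] [AddCommGroup L] [Module R L]
  [AddCommGroup H] [Module R H]

local notation "𝔪" => maximalIdeal R

theorem Good.le {d : ℕ} {J : Ideal R} (h : Good R d J H) : J ≤ 𝔪 := by
  cases d with
  | zero => exact h.1
  | succ d => exact h.1

theorem Good.kil {d : ℕ} {J : Ideal R} (h : Good R d J H) : Kil J H := by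
  cases d with
  | zero => exact h.2.2.1
  | succ d => exact h.2.1

theorem Good.zero_no_reg {J : Ideal R} (h : Good R 0 J H) {u : R} (hu : u ∈ 𝔪) (hr : Reg J u) :
    False := by
  obtain ⟨hJ, ⟨k, hk⟩, _⟩ := h
  have h1 : u ^ k * 1 ∈ J := by rw [mul_one]; exact hk (Ideal.pow_mem_pow hu k)
  have := hJ (hr.pow k 1 h1)
  exact (Ideal.ne_top_iff_one _).1 (maximalIdeal.isMaximal R).ne_top this

theorem pi_inj_reg {J : Ideal R} {b : ℕ} (ι : Y →ₗ[R] (Fin b → R ⧸ J)) (hι : Function.Injective ι)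
    {u : R} (hu : Reg J u) (y : Y) (hy : u • y = 0) : y = 0 := by
  apply hι
  rw [_root_.map_zero]
  exact hu.pi _ (by rw [← _root_.map_smul, hy, _root_.map_zero])

theorem lift_unit {u : R} (hu : u ∉ 𝔪) : ∃ v, v * u = 1 := by
  have : IsUnit u := by
    by_contra h
    exact hu ((mem_maximalIdeal u).2 h)
  obtain ⟨v, hv⟩ := this.exists_left_inv
  exact ⟨v, hv⟩

variable [IsNoetherianRing R]

theorem PdLE.fin {J : Ideal R} {n : ℕ} (h : PdLE J n L) : Module.Finite R L := by
  cases n with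
  | zero =>
    obtain ⟨b, ⟨f⟩⟩ := h
    exact Module.Finite.equiv f.symm
  | succ n =>
    obtain ⟨b, f, hf, hk⟩ := h
    exact Module.Finite.of_surjective f hf

theorem ExExt (d : ℕ) : ∀ {J : Ideal R} {H : Type u} [AddCommGroup H] [Module R H],
    Good R d J H → ∀ {n : ℕ} {Y : Type u} [AddCommGroup Y] [Module R Y] {b : ℕ}
    (ι : Y →ₗ[R] (Fin b → R ⧸ J)), PdLE J n Y → Function.Injective ι → ∀ g : Y →ₗ[R] H,
    ∃ f : (Fin b → R ⧸ J) →ₗ[R] H, ∀ y, f (ι y) = g y := by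
  induction d with
  | zero =>
    intro J H _ _ hH n Y _ _ b ι hY hι g
    have := hY.fin
    obtain ⟨u, hu, ρ, hρ⟩ := hY.split.retract ι hι
    have hum : u ∉ 𝔪 := fun h => hH.zero_no_reg h hu
    obtain ⟨v, hv⟩ := lift_unit hum
    refine ⟨v • (g ∘ₗ ρ), fun y => ?_⟩
    rw [LinearMap.smul_apply, LinearMap.comp_apply, hρ, _root_.map_smul, smul_smul, hv, one_smul]
  | succ d ih =>
    intro J H _ _ hH n Y _ _ b ι hY hι g
    have := hY.fin
    obtain ⟨u, hu, ρ, hρ⟩ := hY.split.retract ι hι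
    by_cases hum : u ∈ 𝔪
    · suffices hg : ∃ g' : Y →ₗ[R] H, ∀ y, u • g' y = g y by
        obtain ⟨g', hg'⟩ := hg
        exact ⟨g' ∘ₗ ρ, fun y => by rw [LinearMap.comp_apply, hρ, _root_.map_smul, hg']⟩
      obtain ⟨hsurj, H', _, _, j, hj, hjr, hG⟩ := hH.2.2.2 u hum hu
      cases n with
      | zero =>
        obtain ⟨b', ⟨e⟩⟩ := hY
        obtain ⟨w, hw⟩ := fl_lift J hH.kil (LinearMap.lsmul R H u) hsurj (g ∘ₗ e.symm.toLinearMap)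
        exact ⟨w ∘ₗ e.toLinearMap, fun y => (hw (e y)).trans (by simp)⟩
      | succ n =>
        obtain ⟨b', π, hπ, hK⟩ := hY
        obtain ⟨w, hw⟩ := fl_lift J hH.kil (LinearMap.lsmul R H u) hsurj (g ∘ₗ π)
        have hw : ∀ x, u • w x = g (π x) := hw
        have hwk : ∀ k : LinearMap.ker π, ∃ x, j x = w k := by
          intro k
          rw [← hjr, hw, LinearMap.mem_ker.1 k.2, _root_.map_zero]
        choose h0 hh0 using hwk
        let h0l : LinearMap.ker π →ₗ[R] H' :=
          { toFun := h0
            map_add' := fun x y => hj (by rw [_root_.map_add, hh0, hh0, hh0]; exact _root_.map_add w _ _)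
            map_smul' := fun r x => hj (by
              rw [_root_.map_smul, hh0, hh0]; exact _root_.map_smul w _ _) }
        have hh0l : ∀ k, j (h0l k) = w k := hh0
        have hu' : ∀ x : H', u • x = 0 := fun x =>
          hG.kil u (Ideal.mem_sup_right (Ideal.mem_span_singleton_self u)) x
        let qk := qb J u b' ∘ₗ (LinearMap.ker π).subtype
        have hqk : ∀ k, qk k = 0 ↔ ∃ k', k = u • k' := by
          rintro ⟨k, hk⟩
          constructor
          · intro h
            obtain ⟨x, rfl⟩ := (qb_ker J u b' k).1 h
            rw [LinearMap.mem_ker, _root_.map_smul] at hk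
            exact ⟨⟨x, pi_inj_reg ι hι hu _ hk⟩, rfl⟩
          · rintro ⟨k', hk'⟩
            exact (qb_ker J u b' k).2 ⟨k'.1, congrArg Subtype.val hk'⟩
        have hqk' : ∀ k, qk.rangeRestrict k = 0 ↔ ∃ k', k = u • k' := by
          intro k
          rw [← hqk]
          exact ⟨fun h => congrArg Subtype.val h, fun h => Subtype.ext h⟩
        obtain ⟨hb, hhb⟩ := descend qk.rangeRestrict qk.surjective_rangeRestrict h0l (fun a ha => by
          obtain ⟨k', rfl⟩ := (hqk' a).1 ha
          rw [_root_.map_smul, hu'])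
        have hpd : PdLE (J ⊔ Ideal.span {u}) n (LinearMap.range qk) :=
          hK.baseChange hu (fun y hy => pi_inj_reg (LinearMap.ker π).subtype
            Subtype.val_injective hu y hy) qk.rangeRestrict qk.surjective_rangeRestrict hqk'
        obtain ⟨h, hh⟩ := ih hG (LinearMap.range qk).subtype hpd Subtype.val_injective hb
        obtain ⟨g', hg'⟩ := descend π hπ (w - j ∘ₗ h ∘ₗ qb J u b') (fun a ha => by
          have h1 := hh (qk.rangeRestrict ⟨a, ha⟩)
          rw [hhb] at h1
          have h2 := hh0l ⟨a, ha⟩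
          rw [← h1] at h2
          rw [LinearMap.sub_apply, sub_eq_zero]
          exact h2.symm)
        refine ⟨g', fun y => ?_⟩
        obtain ⟨a, rfl⟩ := hπ y
        rw [hg', LinearMap.sub_apply, smul_sub, hw, LinearMap.comp_apply, ← _root_.map_smul, hu',
          _root_.map_zero, sub_zero]
    · obtain ⟨v, hv⟩ := lift_unit hum
      refine ⟨v • (g ∘ₗ ρ), fun y => ?_⟩
      rw [LinearMap.smul_apply, LinearMap.comp_apply, hρ, _root_.map_smul, smul_smul, hv, one_smul]

theorem krull_u {J : Ideal R} {u c : R} (hu : u ∈ 𝔪) (hc : c ∉ J) :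
    ∃ N, c ∉ J ⊔ Ideal.span {u ^ (N+1)} := by
  by_contra hcon
  push Not at hcon
  apply hc
  have h := Ideal.iInf_pow_smul_eq_bot_of_isLocalRing (M := R ⧸ J) 𝔪 (maximalIdeal.isMaximal R).ne_top
  have : (Submodule.Quotient.mk c : R ⧸ J) ∈ ⨅ i : ℕ, 𝔪 ^ i • (⊤ : Submodule R (R ⧸ J)) := by
    rw [Submodule.mem_iInf]
    intro i
    obtain ⟨a, ha, b, hb, hab⟩ := Submodule.mem_sup.1 (hcon i)
    obtain ⟨x, rfl⟩ := Ideal.mem_span_singleton'.1 hb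
    have : (Submodule.Quotient.mk c : R ⧸ J) = (u ^ (i+1)) • Submodule.Quotient.mk x := by
      rw [← Submodule.Quotient.mk_smul, Submodule.Quotient.eq, ← hab, smul_eq_mul]
      have : a + x * u ^ (i+1) - u ^ (i+1) * x = a := by ring
      rwa [this]
    rw [this]
    exact Submodule.smul_mem_smul (Ideal.pow_le_pow_right (Nat.le_succ i) (Ideal.pow_mem_pow hu _))
      trivial
  rw [h, Submodule.mem_bot, Submodule.Quotient.mk_eq_zero] at this
  exact this

theorem CogR (d : ℕ) : ∀ {J : Ideal R} {H : Type u} [AddCommGroup H] [Module R H],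
    Good R d J H → ∀ c ∉ J, ∃ h : H, c • h ≠ 0 := by
  induction d with
  | zero =>
    intro J H _ _ hH c hc
    obtain ⟨_, _, _, ⟨e⟩⟩ := hH
    refine ⟨e (Submodule.Quotient.mk 1), fun h => hc ?_⟩
    rw [← _root_.map_smul, LinearEquiv.map_eq_zero_iff, ← Submodule.Quotient.mk_smul,
      Submodule.Quotient.mk_eq_zero] at h
    simpa using h
  | succ d ih =>
    intro J H _ _ hH c hc
    obtain ⟨u, hum, hu⟩ := hH.2.2.1
    obtain ⟨N, hN⟩ := krull_u hum hc
    obtain ⟨_, H', _, _, j, hj, _, hG⟩ := hH.2.2.2 (u ^ (N+1))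
      (Ideal.pow_mem_of_mem _ hum _ (Nat.succ_pos N)) (hu.pow _)
    obtain ⟨h, hh⟩ := ih hG c hN
    refine ⟨j h, fun h0 => hh (hj ?_)⟩
    rw [_root_.map_smul, h0, _root_.map_zero]

theorem Cog (d : ℕ) : ∀ {J : Ideal R} {H : Type u} [AddCommGroup H] [Module R H],
    Good R d J H → ∀ {n : ℕ} {L : Type u} [AddCommGroup L] [Module R L], PdLE J n L →
    ∀ e : L, e ≠ 0 → ∃ f : L →ₗ[R] H, f e ≠ 0 := by
  induction d with
  | zero =>
    intro J H _ _ hH n L _ _ hL e he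
    obtain ⟨s, hs, c, α, β, hβ⟩ := hL.split
    have hsm : s ∉ 𝔪 := fun h => hH.zero_no_reg h hs
    obtain ⟨v, hv⟩ := lift_unit hsm
    have : α e ≠ 0 := by
      intro h0
      have := hβ e
      rw [h0, _root_.map_zero] at this
      apply he
      rw [← one_smul R e, ← hv, mul_smul, ← this, smul_zero]
    obtain ⟨i, hi⟩ := Function.ne_iff.1 this
    obtain ⟨a, ha⟩ := Submodule.Quotient.mk_surjective _ (α e i)
    have haJ : a ∉ J := fun h => hi (by rw [← ha]; exact (Submodule.Quotient.mk_eq_zero _).2 h)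
    obtain ⟨h, hh⟩ := CogR 0 hH a haJ
    refine ⟨(Submodule.liftQ J (LinearMap.toSpanSingleton R H h) (by
      intro r hr; simpa using hH.kil r hr h)) ∘ₗ LinearMap.proj i ∘ₗ α, ?_⟩
    simp only [LinearMap.comp_apply, LinearMap.proj_apply]
    rw [← ha]
    exact fun h' => hh (((Submodule.liftQ_apply _ _ _).trans (by simp)).symm.trans h')
  | succ d ih =>
    intro J H _ _ hH n L _ _ hL e he
    obtain ⟨s, hs, c, α, β, hβ⟩ := hL.split
    by_cases hα : α e = 0
    · have hse : s • e = 0 := by rw [← hβ, hα, _root_.map_zero]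
      have hsm : s ∈ 𝔪 := by
        by_contra hsm
        obtain ⟨v, hv⟩ := lift_unit hsm
        exact he (by rw [← one_smul R e, ← hv, mul_smul, hse, smul_zero])
      cases n with
      | zero =>
        obtain ⟨b, ⟨f⟩⟩ := hL
        exact (he (pi_inj_reg f.toLinearMap f.injective hs e hse)).elim
      | succ n =>
        obtain ⟨b, π, hπ, hK⟩ := hL
        obtain ⟨hsurj, H', _, _, j, hj, hjr, hG⟩ := hH.2.2.2 s hsm hs
        obtain ⟨a, rfl⟩ := hπ e
        let S : Submodule R (LinearMap.ker π) := LinearMap.range (LinearMap.lsmul R (LinearMap.ker π) s)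
        have hqk' : ∀ k, S.mkQ k = 0 ↔ ∃ k', k = s • k' := by
          intro k
          rw [Submodule.mkQ_apply, Submodule.Quotient.mk_eq_zero]
          exact ⟨fun ⟨y, hy⟩ => ⟨y, hy.symm⟩, fun ⟨y, hy⟩ => ⟨y, hy.symm⟩⟩
        have hpd : PdLE (J ⊔ Ideal.span {s}) n (LinearMap.ker π ⧸ S) :=
          hK.baseChange hs (fun y hy => pi_inj_reg (LinearMap.ker π).subtype
            Subtype.val_injective hs y hy) S.mkQ S.mkQ_surjective hqk'
        let k0 : LinearMap.ker π := ⟨s • a, by rw [LinearMap.mem_ker, _root_.map_smul, hse]⟩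
        have hk0 : S.mkQ k0 ≠ 0 := by
          intro h
          obtain ⟨k', hk'⟩ := (hqk' k0).1 h
          have h1 : s • a = s • k'.1 := congrArg Subtype.val hk'
          have h2 : a - k'.1 = 0 := hs.pi _ (by rw [smul_sub, h1, sub_self])
          rw [sub_eq_zero] at h2
          rw [h2] at he
          exact he k'.2
        obtain ⟨g, hg⟩ := ih hG hpd _ hk0
        obtain ⟨f0, hf0⟩ := ExExt (d+1) hH (LinearMap.ker π).subtype hK Subtype.val_injective
          (j ∘ₗ g ∘ₗ S.mkQ)
        obtain ⟨f, hf⟩ := descend π hπ (s • f0) (fun a ha => by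
          have := hf0 ⟨a, ha⟩
          rw [Submodule.subtype_apply] at this
          rw [LinearMap.smul_apply, this, hjr]
          exact ⟨_, rfl⟩)
        refine ⟨f, fun h => hg (hj ?_)⟩
        rw [hf, LinearMap.smul_apply, ← _root_.map_smul] at h
        have := hf0 k0
        rw [Submodule.subtype_apply] at this
        rw [_root_.map_zero, ← h]
        exact this.symm
    · obtain ⟨i, hi⟩ := Function.ne_iff.1 hα
      obtain ⟨a, ha⟩ := Submodule.Quotient.mk_surjective _ (α e i)
      have haJ : a ∉ J := fun h => hi (by rw [← ha]; exact (Submodule.Quotient.mk_eq_zero _).2 h)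
      obtain ⟨h, hh⟩ := CogR (d+1) hH a haJ
      refine ⟨(Submodule.liftQ J (LinearMap.toSpanSingleton R H h) (by
        intro r hr; simpa using hH.kil r hr h)) ∘ₗ LinearMap.proj i ∘ₗ α, ?_⟩
      simp only [LinearMap.comp_apply, LinearMap.proj_apply]
      rw [← ha]
      exact fun h' => hh (((Submodule.liftQ_apply _ _ _).trans (by simp)).symm.trans h')

theorem ext_tor (hH : IsTor 𝔪 H) {u : R} (hu : u ∈ 𝔪) (i : ℕ) (G : Type u) [AddCommGroup G]
    [Module R G] [Module.Finite R G]
    (x : Abelian.Ext.{u} (ModuleCat.of R G) (ModuleCat.of R H) i) : ∃ n : ℕ, u ^ n • x = 0 := by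
  induction i generalizing G with
  | zero =>
    obtain ⟨φ, rfl⟩ := (Ext.mk₀_bijective _ _).2 x
    obtain ⟨n, hn⟩ := IsTor.unif 𝔪 hH (LinearMap.range φ.hom)
      (by rw [LinearMap.range_eq_map]; exact (IsNoetherian.noetherian (⊤ : Submodule R G)).map _)
    refine ⟨n, ?_⟩
    rw [← Ext.mk₀_smul, Ext.mk₀_eq_zero_iff]
    ext y
    exact hn _ (Ideal.pow_mem_pow hu n) _ ⟨y, rfl⟩
  | succ i ih =>
    obtain ⟨b, f, hf⟩ := Module.Finite.exists_fin' R G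
    have hS := sc_se (A := LinearMap.ker f) (B := Fin b → R) (C := G) (LinearMap.ker f).subtype f
      Subtype.val_injective (LinearMap.exact_subtype_ker_map f) hf
    obtain ⟨y, hy⟩ := Ext.contravariant_sequence_exact₃ hS _ x
      ((EZ.proj i (A := Fin b → R) (B := H)).eq_zero _) (add_comm 1 i)
    obtain ⟨n, hn⟩ := ih (LinearMap.ker f) y
    refine ⟨n, ?_⟩
    rw [← hy, ← Ext.comp_smul]
    rw [hn, Ext.comp_zero]

theorem ExtGood (d : ℕ) : ∀ {J : Ideal R} {H : Type u} [AddCommGroup H] [Module R H],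
    Good R d J H → IsTor 𝔪 H → ∀ {G : Type u} [AddCommGroup G] [Module R G] [Module.Finite R G],
    (∀ i, EZ R (i+1) G (R ⧸ J)) → ∀ i, EZ R (i+1) G H := by
  induction d with
  | zero =>
    intro J H _ _ hH _ G _ _ _ hG i
    obtain ⟨_, _, _, ⟨e⟩⟩ := hH
    exact EZ.iso' e (hG i)
  | succ d ih =>
    intro J H _ _ hH htor G _ _ _ hG i
    obtain ⟨u, hum, hu⟩ := hH.2.2.1
    obtain ⟨hsurj, H', _, _, j, hj, hjr, hGd⟩ := hH.2.2.2 u hum hu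
    have htor' : IsTor 𝔪 H' := by
      intro y
      obtain ⟨n, hn⟩ := htor (j y)
      exact ⟨n, fun r hr => hj (by rw [_root_.map_smul, hn r hr, _root_.map_zero])⟩
    have h1 := ih hGd htor' (G := G) (fun i => EZ.cov3 _ _ hu.inj (mul_exact _ u) (pru_surj _ u)
      (hG i) (hG (i+1))) i
    have hex : Function.Exact j (LinearMap.lsmul R H u) := fun h => hjr h
    have key : ∀ x : Abelian.Ext.{u} (ModuleCat.of R G) (ModuleCat.of R H) (i+1), u • x = 0 → x = 0 := by
      intro x hx
      have : x.comp (Ext.mk₀ (ModuleCat.ofHom (LinearMap.lsmul R H u))) (add_zero _) = 0 := by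
        have e : ModuleCat.ofHom (LinearMap.lsmul R H u) = u • 𝟙 (ModuleCat.of R H) := by
          ext; rfl
        rw [e, Ext.mk₀_smul, Ext.comp_smul, Ext.comp_mk₀_id, hx]
      obtain ⟨y, hy⟩ := Ext.covariant_sequence_exact₂ _ (sc_se j _ hj hex hsurj) x this
      rw [← hy, h1.eq_zero y, Ext.zero_comp]
    refine EZ.of_zero fun x => ?_
    obtain ⟨n, hn⟩ := ext_tor htor hum (i+1) G x
    induction n with
    | zero => simpa using hn
    | succ n ihn => exact ihn (key _ (by rw [smul_smul, ← pow_succ', hn]))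

end PartC2

open CategoryTheory Abelian Limits Opposite
section PartD
open IsLocalRing
set_option linter.unusedSectionVars false
variable {R : Type u} [CommRing R] [IsNoetherianRing R]
variable {A B C G K T H : Type u} [AddCommGroup A] [Module R A] [AddCommGroup B] [Module R B]
  [AddCommGroup C] [Module R C] [AddCommGroup G] [Module R G] [AddCommGroup K] [Module R K]
  [AddCommGroup T] [Module R T] [AddCommGroup H] [Module R H]

/-- G-dimension zero -/
structure GZ (R : Type u) [CommRing R] (G : Type u) [AddCommGroup G] [Module R G] : Prop where
  fin : Module.Finite R G
  inj : ∀ g : G, (∀ φ : Module.Dual R G, φ g = 0) → g = 0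
  surj : ∀ κ : Module.Dual R (Module.Dual R G), ∃ g : G, ∀ φ, κ φ = φ g
  e1 : ∀ i, EZ R (i+1) G R
  e2 : ∀ i, EZ R (i+1) (Module.Dual R G) R

theorem GZ.of (h : IsGDimZero R G) : GZ R G where
  fin := h.1
  inj g hg := by
    apply h.2.1.1
    rw [_root_.map_zero]
    ext φ
    exact hg φ
  surj κ := by
    obtain ⟨g, hg⟩ := h.2.1.2 κ
    exact ⟨g, fun φ => by rw [← hg]; rfl⟩
  e1 i := (extM_iff _ _ _).1 (h.2.2.1 (i+1) i.succ_pos)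
  e2 i := (extM_iff _ _ _).1 (h.2.2.2 (i+1) i.succ_pos)

theorem GZ.dual (h : GZ R G) : GZ R (Module.Dual R G) := by
  have := h.fin
  refine ⟨inferInstanceAs (Module.Finite R (G →ₗ[R] R)), ?_, ?_, h.e2, ?_⟩
  · intro f hf
    ext g
    exact hf (Module.Dual.eval R G g)
  · intro κ
    refine ⟨κ ∘ₗ Module.Dual.eval R G, fun φ => ?_⟩
    obtain ⟨g, hg⟩ := h.surj φ
    have : φ = Module.Dual.eval R G g := by ext y; exact hg y
    rw [this]; rfl
  · intro i
    refine EZ.iso (LinearEquiv.ofBijective (Module.Dual.eval R G) ⟨?_, ?_⟩) (h.e1 i)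
    · rw [injective_iff_map_eq_zero]
      intro g hg
      exact h.inj g fun φ => LinearMap.congr_fun hg φ
    · intro κ
      obtain ⟨g, hg⟩ := h.surj κ
      exact ⟨g, by ext φ; exact (hg φ).symm⟩

theorem dual_exact (f : A →ₗ[R] B) (g : B →ₗ[R] C) (hfg : Function.Exact f g)
    (hg : Function.Surjective g) : Function.Exact g.dualMap f.dualMap := by
  intro φ
  constructor
  · intro h
    obtain ⟨ψ, hψ⟩ := descend g hg φ (fun b hb => by
      obtain ⟨a, rfl⟩ := (hfg b).1 hb
      exact LinearMap.congr_fun h a)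
    exact ⟨ψ, by ext b; exact hψ b⟩
  · rintro ⟨ψ, rfl⟩
    ext a
    simp [LinearMap.dualMap_apply, hfg.apply_apply_eq_zero]

theorem dual_inj (g : B →ₗ[R] C) (hg : Function.Surjective g) : Function.Injective g.dualMap :=
  LinearMap.dualMap_injective_of_surjective hg

theorem dual_surj (f : A →ₗ[R] B) (g : B →ₗ[R] C) (hf : Function.Injective f)
    (hfg : Function.Exact f g) (hg : Function.Surjective g) (h : EZ R 1 C R) :
    Function.Surjective f.dualMap := fun φ => EZ.extend f g hf hfg hg h φ

theorem GZ.ext (f : A →ₗ[R] B) (g : B →ₗ[R] C) (hf : Function.Injective f)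
    (hfg : Function.Exact f g) (hg : Function.Surjective g) (hA : GZ R A) (hC : GZ R C) :
    GZ R B := by
  have h1 := dual_inj g hg
  have h2 := dual_exact f g hfg hg
  have h3 := dual_surj f g hf hfg hg (hC.e1 0)
  have := hA.fin
  have := hC.fin
  refine ⟨Module.Finite.of_exact hfg hg, ?_, ?_,
    fun i => EZ.contra2 f g hf hfg hg (hC.e1 i) (hA.e1 i),
    fun i => EZ.contra2 _ _ h1 h2 h3 (hA.e2 i) (hC.e2 i)⟩
  · intro b hb
    have : g b = 0 := hC.inj _ fun φ => hb (φ ∘ₗ g)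
    obtain ⟨a, rfl⟩ := (hfg b).1 this
    rw [hA.inj a, _root_.map_zero]
    intro φ
    obtain ⟨ψ, rfl⟩ := h3 φ
    exact hb ψ
  · intro β
    obtain ⟨c, hc⟩ := hC.surj (β ∘ₗ g.dualMap)
    obtain ⟨b, rfl⟩ := hg c
    obtain ⟨α, hα⟩ := descend f.dualMap h3 (β - Module.Dual.eval R B b) (fun φ hφ => by
      obtain ⟨ψ, rfl⟩ := (h2 φ).1 hφ
      rw [LinearMap.sub_apply, sub_eq_zero]
      exact hc ψ)
    obtain ⟨a, ha⟩ := hA.surj α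
    refine ⟨b + f a, fun φ => ?_⟩
    have := hα φ
    rw [ha, LinearMap.sub_apply] at this
    rw [_root_.map_add]
    have h' : φ (f a) = β φ - φ b := this
    rw [h']; abel

theorem GZ.ker {b : ℕ} (p : (Fin b → R) →ₗ[R] C) (hp : Function.Surjective p) (hC : GZ R C) :
    GZ R (LinearMap.ker p) := by
  have hs := LinearMap.exact_subtype_ker_map p
  have hi : Function.Injective (LinearMap.ker p).subtype := Subtype.val_injective
  have h1 := dual_inj p hp
  have h2 := dual_exact _ p hs hp
  have h3 := dual_surj _ p hi hs hp (hC.e1 0)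
  have hrf : ∀ κ : Module.Dual R (Module.Dual R (Fin b → R)), ∃ x, ∀ φ, κ φ = φ x := by
    intro κ
    obtain ⟨x, rfl⟩ := (Module.bijective_dual_eval R (Fin b → R)).2 κ
    exact ⟨x, fun φ => rfl⟩
  refine ⟨inferInstance, ?_, ?_, fun i => EZ.contra1 _ _ hi hs hp (EZ.proj i) (hC.e1 (i+1)), ?_⟩
  · intro k hk
    apply Subtype.ext
    funext i
    exact hk (LinearMap.proj i ∘ₗ (LinearMap.ker p).subtype)
  · intro κ
    obtain ⟨x, hx⟩ := hrf (κ ∘ₗ (LinearMap.ker p).subtype.dualMap)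
    have : p x = 0 := hC.inj _ fun φ => by
      have := hx (p.dualMap φ)
      rw [LinearMap.comp_apply, h2.apply_apply_eq_zero, _root_.map_zero] at this
      exact this.symm
    refine ⟨⟨x, this⟩, fun φ => ?_⟩
    obtain ⟨ψ, rfl⟩ := h3 φ
    exact hx ψ
  · intro i
    cases i with
    | zero =>
      refine EZ.of_extend _ _ h1 h2 h3 ?_ (EZ.proj 0)
      intro φ
      obtain ⟨c, hc⟩ := hC.surj φ
      obtain ⟨x, rfl⟩ := hp c
      refine ⟨Module.Dual.eval R _ x, ?_⟩
      ext ψ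
      exact (hc ψ).symm
    | succ i => exact EZ.contra3 _ _ h1 h2 h3 (hC.e2 i) (EZ.proj _)

theorem GZ.embed (h : GZ R G) : ∃ (b : ℕ) (ι : G →ₗ[R] (Fin b → R)) (C : Type u)
    (_ : AddCommGroup C) (_ : Module R C) (q : (Fin b → R) →ₗ[R] C), Function.Injective ι ∧
    Function.Exact ι q ∧ Function.Surjective q ∧ GZ R C := by
  have hd := h.dual
  have := hd.fin
  obtain ⟨b, p, hp⟩ := Module.Finite.exists_fin' R (Module.Dual R G)
  have hs := LinearMap.exact_subtype_ker_map p
  have hi : Function.Injective (LinearMap.ker p).subtype := Subtype.val_injective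
  let D : (Fin b → R) →ₗ[R] Module.Dual R (Fin b → R) := (Pi.basisFun R (Fin b)).toDual
  have hD : ∀ x i, D x (Pi.single i 1) = x i := by
    intro x i
    have := Module.Basis.toDual_apply_left (Pi.basisFun R (Fin b)) x i
    simpa using this
  refine ⟨b, LinearMap.pi fun i => p (Pi.single i 1), Module.Dual R (LinearMap.ker p), inferInstance,
    inferInstance, (LinearMap.ker p).subtype.dualMap ∘ₗ D, ?_, ?_, ?_, (GZ.ker p hp hd).dual⟩
  · rw [injective_iff_map_eq_zero]
    intro g hg
    refine h.inj g fun φ => ?_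
    obtain ⟨x, rfl⟩ := hp φ
    have : Module.Dual.eval R G g ∘ₗ p = 0 := by
      ext i
      exact congrFun hg i
    exact LinearMap.congr_fun this x
  · intro x
    constructor
    · intro hx
      obtain ⟨κ, hκ⟩ := descend p hp (D x) (fun a ha => LinearMap.congr_fun hx ⟨a, ha⟩)
      obtain ⟨g, hg⟩ := h.surj κ
      refine ⟨g, ?_⟩
      funext i
      rw [← hD x i, ← hκ, hg]; rfl
    · rintro ⟨g, rfl⟩
      have : D (LinearMap.pi (fun i => p (Pi.single i 1)) g) = Module.Dual.eval R G g ∘ₗ p := by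
        ext i
        simp only [LinearMap.comp_apply, LinearMap.single_apply]
        rw [hD]; rfl
      rw [LinearMap.comp_apply, this]
      ext k
      change (p k.1) g = 0
      rw [k.2]; rfl
  · intro φ
    obtain ⟨ψ, hψ⟩ := EZ.extend _ p hi hs hp (hd.e1 0) φ
    refine ⟨fun i => ψ (Pi.single i 1), ?_⟩
    have : D (fun i => ψ (Pi.single i 1)) = ψ := by
      ext i
      simp only [LinearMap.comp_apply, LinearMap.single_apply]
      rw [hD]
    rw [LinearMap.comp_apply, this]
    exact hψ

/-- `R ≃ R/⊥` on finite powers -/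
noncomputable def rb (R : Type u) [CommRing R] (b : ℕ) : (Fin b → R ⧸ (⊥ : Ideal R)) ≃ₗ[R] (Fin b → R) :=
  LinearEquiv.piCongrRight fun _ => Submodule.quotEquivOfEqBot _ rfl

/-- hull -/
def Hull (n : ℕ) (T : Type u) [AddCommGroup T] [Module R T] : Prop :=
  ∃ (L : Type u) (_ : AddCommGroup L) (_ : Module R L) (C : Type u) (_ : AddCommGroup C)
    (_ : Module R C) (ι : T →ₗ[R] L) (q : L →ₗ[R] C), Function.Injective ι ∧ Function.Exact ι q ∧
    Function.Surjective q ∧ PdLE (⊥ : Ideal R) n L ∧ GZ R C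

theorem hull_step {n : ℕ} (f : G →ₗ[R] T) (hf : Function.Surjective f) (hG : GZ R G)
    (hY : Hull (R := R) n (LinearMap.ker f)) : Hull (R := R) (n+1) T := by
  obtain ⟨L', _, _, C', _, _, ι, q', hι, hιq, hq', hpd, hC'⟩ := hY
  let N : Submodule R (L' × G) := LinearMap.range (ι.prod (-(LinearMap.ker f).subtype))
  have hN : ∀ l g, (l, g) ∈ N ↔ ∃ y : LinearMap.ker f, ι y = l ∧ -(y : G) = g := by
    intro l g
    constructor
    · rintro ⟨y, hy⟩; exact ⟨y, congrArg Prod.fst hy, congrArg Prod.snd hy⟩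
    · rintro ⟨y, rfl, rfl⟩; exact ⟨y, rfl⟩
  let a : L' →ₗ[R] (L' × G) ⧸ N := N.mkQ ∘ₗ LinearMap.inl R L' G
  let c : G →ₗ[R] (L' × G) ⧸ N := N.mkQ ∘ₗ LinearMap.inr R L' G
  obtain ⟨w1, hw1⟩ := descend N.mkQ N.mkQ_surjective (q' ∘ₗ LinearMap.fst R L' G) (by
    rintro ⟨l, g⟩ h
    rw [Submodule.mkQ_apply, Submodule.Quotient.mk_eq_zero, hN] at h
    obtain ⟨y, rfl, _⟩ := h
    exact hιq.apply_apply_eq_zero y)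
  obtain ⟨w2, hw2⟩ := descend N.mkQ N.mkQ_surjective (f ∘ₗ LinearMap.snd R L' G) (by
    rintro ⟨l, g⟩ h
    rw [Submodule.mkQ_apply, Submodule.Quotient.mk_eq_zero, hN] at h
    obtain ⟨y, _, rfl⟩ := h
    have : f y = 0 := y.2
    simp [this])
  have hW : GZ R ((L' × G) ⧸ N) := by
    refine GZ.ext c w1 ?_ ?_ ?_ hG hC'
    · rw [injective_iff_map_eq_zero]
      intro g hg
      have hg' : ((0 : L'), g) ∈ N := (Submodule.Quotient.mk_eq_zero _).1 hg
      obtain ⟨y, hy, rfl⟩ := (hN _ _).1 hg'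
      rw [hι (hy.trans (_root_.map_zero ι).symm)]; simp
    · intro w
      obtain ⟨⟨l, g⟩, rfl⟩ := N.mkQ_surjective w
      rw [hw1]
      constructor
      · intro h
        obtain ⟨y, hy⟩ := (hιq l).1 h
        refine ⟨g + y, ?_⟩
        refine (Submodule.Quotient.eq N).2 ?_
        change ((0:L') - l, g + y - g) ∈ N
        rw [hN]
        exact ⟨-y, by rw [_root_.map_neg, hy]; simp, by simp⟩
      · rintro ⟨g', h⟩
        have h2 := congrArg w1 h
        rw [hw1] at h2
        rw [← h2]
        change w1 (N.mkQ (0, g')) = 0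
        rw [hw1]; simp
    · intro x
      obtain ⟨l, rfl⟩ := hq' x
      exact ⟨N.mkQ (l, 0), hw1 _⟩
  have ha : Function.Injective a := by
    rw [injective_iff_map_eq_zero]
    intro l hl
    have hl' : (l, (0 : G)) ∈ N := (Submodule.Quotient.mk_eq_zero _).1 hl
    obtain ⟨y, rfl, hy⟩ := (hN _ _).1 hl'
    have : y = 0 := Subtype.ext (neg_eq_zero.1 hy)
    rw [this, _root_.map_zero]
  have haw : ∀ w, w2 w = 0 ↔ ∃ l, a l = w := by
    intro w
    obtain ⟨⟨l, g⟩, rfl⟩ := N.mkQ_surjective w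
    rw [hw2]
    constructor
    · intro h
      refine ⟨l + ι ⟨g, h⟩, (Submodule.Quotient.eq N).2 ?_⟩
      change (l + ι ⟨g, h⟩ - l, 0 - g) ∈ N
      rw [hN]
      exact ⟨⟨g, h⟩, by simp, by simp⟩
    · rintro ⟨l', h⟩
      have h2 := congrArg w2 h
      rw [hw2] at h2
      rw [← h2]
      change w2 (N.mkQ (l', 0)) = 0
      rw [hw2]; simp
  have hw2s : Function.Surjective w2 := by
    intro t
    obtain ⟨g, rfl⟩ := hf t
    exact ⟨N.mkQ (0, g), hw2 _⟩
  obtain ⟨b, j, C, _, _, p, hj, hjp, hp, hC⟩ := hW.embed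
  let S : Submodule R (Fin b → R) := LinearMap.range (j ∘ₗ a)
  obtain ⟨t, ht⟩ := descend w2 hw2s (S.mkQ ∘ₗ j) (by
    intro w hw
    obtain ⟨l, rfl⟩ := (haw w).1 hw
    exact (Submodule.Quotient.mk_eq_zero _).2 ⟨l, rfl⟩)
  obtain ⟨q, hq⟩ := descend S.mkQ S.mkQ_surjective p (by
    intro x hx
    obtain ⟨l, rfl⟩ := (Submodule.Quotient.mk_eq_zero _).1 hx
    exact hjp.apply_apply_eq_zero _)
  refine ⟨(Fin b → R) ⧸ S, inferInstance, inferInstance, C, inferInstance, inferInstance, t, q,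
    ?_, ?_, ?_, ?_, hC⟩
  · rw [injective_iff_map_eq_zero]
    intro x hx
    obtain ⟨w, rfl⟩ := hw2s x
    rw [ht] at hx
    obtain ⟨l, hl⟩ := (Submodule.Quotient.mk_eq_zero _).1 hx
    exact (haw w).2 ⟨l, hj hl⟩
  · intro y
    obtain ⟨x, rfl⟩ := S.mkQ_surjective y
    rw [hq]
    constructor
    · intro h
      obtain ⟨w, rfl⟩ := (hjp x).1 h
      exact ⟨w2 w, ht w⟩
    · rintro ⟨z, hz⟩
      obtain ⟨w, rfl⟩ := hw2s z
      rw [← hq, ← hz, ht]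
      change q (S.mkQ (j w)) = 0
      rw [hq]
      exact hjp.apply_apply_eq_zero _
  · intro y
    obtain ⟨x, rfl⟩ := hp y
    exact ⟨_, hq x⟩
  · refine ⟨b, S.mkQ ∘ₗ (rb R b).toLinearMap, S.mkQ_surjective.comp (rb R b).surjective, ?_⟩
    let k : L' →ₗ[R] LinearMap.ker (S.mkQ ∘ₗ (rb R b).toLinearMap) :=
      LinearMap.codRestrict _ ((rb R b).symm.toLinearMap ∘ₗ j ∘ₗ a) (by
        intro l
        rw [LinearMap.mem_ker]
        simp only [LinearMap.comp_apply, LinearEquiv.coe_coe, LinearEquiv.apply_symm_apply]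
        exact (Submodule.Quotient.mk_eq_zero _).2 ⟨l, rfl⟩)
    refine PdLE.iso hpd (LinearEquiv.ofBijective k ⟨?_, ?_⟩)
    · intro x y hxy
      exact ha (hj ((rb R b).symm.injective (congrArg Subtype.val hxy)))
    · rintro ⟨x, hx⟩
      obtain ⟨l, hl⟩ := (Submodule.Quotient.mk_eq_zero _).1 hx
      refine ⟨l, Subtype.ext ?_⟩
      change (rb R b).symm ((j ∘ₗ a) l) = x
      rw [hl]; simp

theorem hull_of (k : ℕ) : ∀ {T : ModuleCat.{u} R}, GDimLE R k T → Hull (R := R) k T := by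
  induction k with
  | zero =>
    intro T h
    obtain ⟨b, ι, C, _, _, q, h1, h2, h3, h4⟩ := (GZ.of h).embed
    exact ⟨_, _, _, C, _, _, ι, q, h1, h2, h3, ⟨b, ⟨(rb R b).symm⟩⟩, h4⟩
  | succ k ih =>
    rintro T ⟨G, f, hG, hf, hk⟩
    exact hull_step f hf (GZ.of hG) (ih hk)

variable [IsLocalRing R]

theorem Hull.ez {d n : ℕ} (hH : Good R d (⊥ : Ideal R) H) (htor : IsTor (maximalIdeal R) H) (hT : Hull (R := R) n T) :
    EZ R 1 T H := by
  obtain ⟨L, _, _, C, _, _, ι, q, h1, h2, h3, h4, h5⟩ := hT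
  have := h5.fin
  have e : R ≃ₗ[R] (R ⧸ (⊥ : Ideal R)) := (Submodule.quotEquivOfEqBot _ rfl).symm
  refine EZ.contra1 ι q h1 h2 h3 ?_ (ExtGood d hH htor (fun i => EZ.iso' e (h5.e1 i)) 1)
  have hP : ∀ b, Module.Projective R (Fin b → R ⧸ (⊥ : Ideal R)) := fun b =>
    Module.Projective.of_equiv (rb R b).symm
  cases n with
  | zero =>
    obtain ⟨b, ⟨f⟩⟩ := h4
    have := hP b
    exact EZ.iso f.symm (EZ.proj 0)
  | succ n =>
    obtain ⟨b, f, hf, hk⟩ := h4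
    have := hP b
    refine EZ.of_extend (LinearMap.ker f).subtype f Subtype.val_injective
      (LinearMap.exact_subtype_ker_map f) hf ?_ (EZ.proj 0)
    intro φ
    obtain ⟨ψ, hψ⟩ := ExExt d hH (LinearMap.ker f).subtype hk Subtype.val_injective φ
    exact ⟨ψ, by ext y; exact hψ y⟩

theorem Hull.cog {d n : ℕ} (hH : Good R d (⊥ : Ideal R) H) (hT : Hull (R := R) n T)
    (t : T) (ht : t ≠ 0) : ∃ f : T →ₗ[R] H, f t ≠ 0 := by
  obtain ⟨L, _, _, C, _, _, ι, q, h1, h2, h3, h4, h5⟩ := hT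
  obtain ⟨f, hf⟩ := Cog d hH h4 (ι t) (fun h => ht (h1 (by rw [h, _root_.map_zero])))
  exact ⟨f ∘ₗ ι, hf⟩

end PartD

open CategoryTheory Abelian Limits Opposite
section PartE
open IsLocalRing
set_option linter.unusedSectionVars false
variable {R : Type u} [CommRing R] [IsNoetherianRing R] [IsLocalRing R]
variable {P Q : Type u} [AddCommGroup P] [Module R P] [AddCommGroup Q] [Module R Q]
variable {P0 P1 P2 : Type u} [AddCommGroup P0] [Module R P0] [AddCommGroup P1] [Module R P1]
  [AddCommGroup P2] [Module R P2]

/-- `R ≃ R/⊥` -/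
noncomputable def be (R : Type u) [CommRing R] : R ≃ₗ[R] (R ⧸ (⊥ : Ideal R)) :=
  (Submodule.quotEquivOfEqBot _ rfl).symm

/-- top local cohomology -/
abbrev HT (R : Type u) [CommRing R] [IsLocalRing R] (d : ℕ) : Type u :=
  LC (maximalIdeal R) (R ⧸ (⊥ : Ideal R)) d

/-- theta -/
noncomputable def th (d : ℕ) (P : Type u) [AddCommGroup P] [Module R P]
    (z : LC (maximalIdeal R) P d) : Module.Dual R P →ₗ[R] HT R d where
  toFun φ := LC.map (maximalIdeal R) d ((be R).toLinearMap ∘ₗ φ) z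
  map_add' φ ψ := by rw [LinearMap.comp_add, LC.map_add]
  map_smul' r φ := by rw [LinearMap.comp_smul, LC.map_smul]; rfl

theorem th_apply (d : ℕ) (z : LC (maximalIdeal R) P d) (φ : Module.Dual R P) :
    th d P z φ = LC.map (maximalIdeal R) d ((be R).toLinearMap ∘ₗ φ) z := rfl

theorem dual_basis [Module.Finite R P] [Module.Projective R P] : ∃ (n : ℕ) (s : Fin n → Module.Dual R P)
    (e : Fin n → P), ∀ x, x = ∑ i, s i x • e i := by
  obtain ⟨n, p, hp⟩ := Module.Finite.exists_fin' R P
  obtain ⟨s, hs⟩ := Module.projective_lifting_property p LinearMap.id hp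
  refine ⟨n, fun i => LinearMap.proj i ∘ₗ s, fun i => p (Pi.single i 1), fun x => ?_⟩
  have h1 := LinearMap.congr_fun hs x
  simp only [LinearMap.comp_apply, LinearMap.id_apply] at h1
  conv_lhs => rw [← h1, pi_eq_sum_univ' (s x), map_sum]
  refine Finset.sum_congr rfl fun i _ => ?_
  rw [_root_.map_smul]; rfl

theorem lc_dec (d : ℕ) [Module.Finite R P] [Module.Projective R P] : ∃ (n : ℕ)
    (s : Fin n → Module.Dual R P) (e : Fin n → P), (∀ x, x = ∑ i, s i x • e i) ∧
    ∀ z : LC (maximalIdeal R) P d, z = ∑ i, LC.map (maximalIdeal R) d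
      (LinearMap.toSpanSingleton R P (e i) ∘ₗ (be R).symm.toLinearMap)
      (LC.map (maximalIdeal R) d ((be R).toLinearMap ∘ₗ s i) z) := by
  obtain ⟨n, s, e, h⟩ := dual_basis (R := R) (P := P)
  refine ⟨n, s, e, h, fun z => ?_⟩
  have : (LinearMap.id : P →ₗ[R] P) = ∑ i,
      (LinearMap.toSpanSingleton R P (e i) ∘ₗ (be R).symm.toLinearMap) ∘ₗ
        ((be R).toLinearMap ∘ₗ s i) := by
    ext x
    rw [LinearMap.id_apply, LinearMap.sum_apply]
    conv_lhs => rw [h x]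
    refine Finset.sum_congr rfl fun i _ => ?_
    simp
  conv_lhs => rw [← LC.map_id (maximalIdeal R) z, this, LC.map_sum]
  refine Finset.sum_congr rfl fun i _ => ?_
  rw [LC.map_comp]

theorem th_inj (d : ℕ) [Module.Finite R P] [Module.Projective R P] (z : LC (maximalIdeal R) P d)
    (hz : th d P z = 0) : z = 0 := by
  obtain ⟨n, s, e, -, h⟩ := lc_dec (R := R) (P := P) d
  rw [h z]
  refine Finset.sum_eq_zero fun i _ => ?_
  have := LinearMap.congr_fun hz (s i)
  rw [th_apply] at this
  rw [this, LinearMap.zero_apply, _root_.map_zero]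

theorem th_surj (d : ℕ) [Module.Finite R P] [Module.Projective R P]
    (h : Module.Dual R P →ₗ[R] HT R d) : ∃ z, th d P z = h := by
  obtain ⟨n, s, e, hse⟩ := dual_basis (R := R) (P := P)
  refine ⟨∑ i, LC.map (maximalIdeal R) d
    (LinearMap.toSpanSingleton R P (e i) ∘ₗ (be R).symm.toLinearMap) (h (s i)), ?_⟩
  ext φ
  rw [th_apply, map_sum]
  have hφ : φ = ∑ i, φ (e i) • s i := by
    ext x
    conv_lhs => rw [hse x, map_sum]
    simp [LinearMap.sum_apply, mul_comm]
  conv_rhs => rw [hφ, map_sum]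
  refine Finset.sum_congr rfl fun i _ => ?_
  rw [← LC.map_comp, _root_.map_smul, ← LC.map_lsmul]
  congr 2
  refine LinearMap.ext fun x => ?_
  obtain ⟨y, rfl⟩ := (be R).surjective x
  simp only [LinearMap.comp_apply, LinearEquiv.coe_coe, LinearEquiv.symm_apply_apply,
    LinearMap.toSpanSingleton_apply, _root_.map_smul, LinearMap.lsmul_apply]
  rw [← _root_.map_smul (be R), ← _root_.map_smul (be R), smul_eq_mul, smul_eq_mul, mul_comm]

theorem th_nat (d : ℕ) (f : P →ₗ[R] Q) (z : LC (maximalIdeal R) P d) :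
    th d Q (LC.map (maximalIdeal R) d f z) = th d P z ∘ₗ f.dualMap := by
  ext φ
  rw [th_apply, ← LC.map_comp]; rfl

theorem lc_proj {d : ℕ} (h : CMQ d (⊥ : Ideal R)) [Module.Finite R P] [Module.Projective R P] (j : ℕ)
    (hj : j ≠ d) : Subsingleton (LC (maximalIdeal R) P j) := by
  obtain ⟨n, s, e, -, hz⟩ := lc_dec (R := R) (P := P) j
  have := h.lc j hj
  refine ⟨fun a b => ?_⟩
  suffices H : ∀ a : LC (maximalIdeal R) P j, a = 0 by rw [H a, H b]
  intro z
  rw [hz z]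
  refine Finset.sum_eq_zero fun i _ => ?_
  rw [Subsingleton.elim (LC.map (maximalIdeal R) j ((be R).toLinearMap ∘ₗ s i) z) 0, _root_.map_zero]

theorem GZ.proj [Module.Finite R P] [Module.Projective R P] : GZ R P where
  fin := inferInstance
  inj g hg := by
    apply (Module.bijective_dual_eval R P).1
    rw [_root_.map_zero]
    ext φ
    exact hg φ
  surj κ := by
    obtain ⟨g, hg⟩ := (Module.bijective_dual_eval R P).2 κ
    exact ⟨g, fun φ => by rw [← hg]; rfl⟩
  e1 i := EZ.proj i
  e2 i := EZ.proj i

theorem Hull.iso {n : ℕ} (h : Hull (R := R) n P) (e : P ≃ₗ[R] Q) : Hull (R := R) n Q := by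
  obtain ⟨L, _, _, C, _, _, ι, q, h1, h2, h3, h4, h5⟩ := h
  refine ⟨L, _, _, C, _, _, ι ∘ₗ e.symm.toLinearMap, q, h1.comp e.symm.injective, ?_, h3, h4, h5⟩
  intro y
  rw [h2 y]
  constructor
  · rintro ⟨x, rfl⟩; exact ⟨e x, by simp⟩
  · rintro ⟨x, rfl⟩; exact ⟨e.symm x, rfl⟩

/-- finite G-dimension substitute -/
def HU (P : Type u) [AddCommGroup P] [Module R P] : Prop := ∃ n, Hull (R := R) n P

/-- transpose -/
abbrev TT (d0 : P1 →ₗ[R] P0) : Type u := Module.Dual R P1 ⧸ LinearMap.range d0.dualMap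

/-- Surjectivity on Hom into H. -/
def SS (d : ℕ) (d1 : P2 →ₗ[R] P1) (d0 : P1 →ₗ[R] P0) : Prop :=
  ∀ h : Module.Dual R P1 →ₗ[R] HT R d, h ∘ₗ d0.dualMap = 0 →
    ∃ h' : Module.Dual R P2 →ₗ[R] HT R d, h' ∘ₗ d1.dualMap = h

section
variable [Module.Finite R P0] [Module.Projective R P0] [Module.Finite R P1] [Module.Projective R P1]
  [Module.Finite R P2] [Module.Projective R P2]

theorem HU.first (d0 : P1 →ₗ[R] P0) (h : HU (R := R) (LinearMap.range d0.dualMap)) : HU (R := R) (TT d0) := by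
  obtain ⟨n, h⟩ := h
  refine ⟨n+1, hull_step (Submodule.mkQ _) (Submodule.mkQ_surjective _) (GZ.proj (P := P1)).dual
    (h.iso (LinearEquiv.ofEq _ _ (Submodule.ker_mkQ _).symm))⟩

theorem HU.step (d1 : P2 →ₗ[R] P1) (d0 : P1 →ₗ[R] P0) (hex : Function.Exact d0.dualMap d1.dualMap)
    (h : HU (R := R) (TT d0)) : HU (R := R) (TT d1) := by
  obtain ⟨n, h⟩ := h
  refine HU.first d1 ⟨n, h.iso ?_⟩
  exact Submodule.quotEquivOfEq _ _ (LinearMap.exact_iff.1 hex).symm ≪≫ₗ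
    LinearMap.quotKerEquivRange _

theorem SS.of_exact {d : ℕ} (h : CMQ d (⊥ : Ideal R)) (d1 : P2 →ₗ[R] P1) (d0 : P1 →ₗ[R] P0)
    (hex : Function.Exact d0.dualMap d1.dualMap)
    (hT : HU (R := R) (TT d1)) : SS d d1 d0 := by
  intro g hg
  obtain ⟨n, hT⟩ := hT
  have h1 := hT.ez h.good (fun z => LC.torsion _ z)
  have hr : ∀ φ : Module.Dual R P1, LinearMap.rangeRestrict d1.dualMap φ = 0 → g φ = 0 := by
    intro φ hφ
    obtain ⟨ψ, rfl⟩ := (hex φ).1 (congrArg Subtype.val hφ)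
    exact LinearMap.congr_fun hg ψ
  obtain ⟨g', hg'⟩ := descend (A := Module.Dual R P1) (B := LinearMap.range d1.dualMap)
    (LinearMap.rangeRestrict d1.dualMap)
    (LinearMap.surjective_rangeRestrict _) g hr
  obtain ⟨k, hk⟩ := EZ.extend (A := LinearMap.range d1.dualMap) (B := Module.Dual R P2)
    (C := TT d1) (LinearMap.range d1.dualMap).subtype (Submodule.mkQ _)
    Subtype.val_injective (LinearMap.exact_subtype_mkQ _) (Submodule.mkQ_surjective _) h1 g'
  refine ⟨k, ?_⟩
  ext φ
  rw [← hg', ← hk]; rfl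

theorem SS.exact {d : ℕ} (h : CMQ d (⊥ : Ideal R)) (d1 : P2 →ₗ[R] P1) (d0 : P1 →ₗ[R] P0)
    (h01 : ∀ x, d0 (d1 x) = 0)
    (hT : HU (R := R) (TT d0)) (hS : SS d d1 d0) : Function.Exact d0.dualMap d1.dualMap := by
  intro φ
  constructor
  · intro hφ
    by_contra hcon
    obtain ⟨n, hT⟩ := hT
    obtain ⟨f, hf⟩ := hT.cog h.good (Submodule.Quotient.mk φ)
      (fun h => hcon ((Submodule.Quotient.mk_eq_zero _).1 h))
    obtain ⟨k, hk⟩ := hS (f ∘ₗ Submodule.mkQ _) (by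
      ext ψ
      have : Submodule.mkQ (LinearMap.range d0.dualMap) (d0.dualMap ψ) = 0 :=
        (Submodule.Quotient.mk_eq_zero _).2 ⟨ψ, rfl⟩
      rw [LinearMap.comp_apply, LinearMap.comp_apply, this, _root_.map_zero]; rfl)
    apply hf
    have := LinearMap.congr_fun hk φ
    rw [LinearMap.comp_apply, hφ, _root_.map_zero] at this
    exact this.symm
  · rintro ⟨ψ, rfl⟩
    ext x
    simp [LinearMap.dualMap_apply, h01]

theorem ez_iff (d1 : P2 →ₗ[R] P1) (d0 : P1 →ₗ[R] P0) (h01 : Function.Exact d1 d0) :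
    EZ R 1 (P0 ⧸ LinearMap.range d0) R ↔ Function.Exact d0.dualMap d1.dualMap := by
  have hi : Function.Injective (LinearMap.range d0).subtype := Subtype.val_injective
  have he := LinearMap.exact_subtype_mkQ (LinearMap.range d0)
  have hs := Submodule.mkQ_surjective (LinearMap.range d0)
  constructor
  · intro h φ
    constructor
    · intro hφ
      obtain ⟨ψ, hψ⟩ := descend d0.rangeRestrict (LinearMap.surjective_rangeRestrict _) φ (by
        intro a ha
        obtain ⟨b, rfl⟩ := (h01 a).1 (congrArg Subtype.val ha)
        exact LinearMap.congr_fun hφ b)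
      obtain ⟨χ, hχ⟩ := EZ.extend _ _ hi he hs h ψ
      refine ⟨χ, ?_⟩
      ext a
      rw [← hψ, ← hχ]; rfl
    · rintro ⟨ψ, rfl⟩
      ext x
      simp [LinearMap.dualMap_apply, h01.apply_apply_eq_zero]
  · intro h
    refine EZ.of_extend _ _ hi he hs ?_ (EZ.proj 0)
    intro φ
    obtain ⟨χ, hχ⟩ := (h (φ ∘ₗ d0.rangeRestrict)).1 (by
      ext x
      change φ (d0.rangeRestrict (d1 x)) = 0
      have : d0.rangeRestrict (d1 x) = 0 := Subtype.ext (h01.apply_apply_eq_zero x)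
      rw [this, _root_.map_zero])
    refine ⟨χ, ?_⟩
    ext ⟨_, a, rfl⟩
    exact LinearMap.congr_fun hχ a

theorem lc_right {d : ℕ} (hR : ringKrullDim R ≤ (d : WithBot ℕ∞)) [Module.Finite R P] (p : P →ₗ[R] Q)
    (hp : Function.Surjective p) (z : LC (maximalIdeal R) Q d) :
    ∃ w, LC.map (maximalIdeal R) d p w = z :=
  LC.ex3 _ (LinearMap.ker p).subtype p Subtype.val_injective (LinearMap.exact_subtype_ker_map p) hp z
    ((LC_fg hR (LinearMap.ker p) inferInstance (d+1) (Nat.lt_succ_self d)).elim _ _)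

theorem lc_iff {e : ℕ} (hR : ringKrullDim R ≤ ((e+1 : ℕ) : WithBot ℕ∞)) (h : CMQ (e+1) (⊥ : Ideal R))
    (d1 : P2 →ₗ[R] P1) (d0 : P1 →ₗ[R] P0) (h01 : Function.Exact d1 d0) :
    Subsingleton (LC (maximalIdeal R) (P0 ⧸ LinearMap.range d0) e) ↔ SS (e+1) d1 d0 := by
  have hi : Function.Injective (LinearMap.range d0).subtype := Subtype.val_injective
  have he := LinearMap.exact_subtype_mkQ (LinearMap.range d0)
  have hs := Submodule.mkQ_surjective (LinearMap.range d0)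
  have hfac : (LinearMap.range d0).subtype ∘ₗ d0.rangeRestrict = d0 := by ext; rfl
  constructor
  · intro hsub g hg
    obtain ⟨z, rfl⟩ := th_surj (e+1) g
    have hz : LC.map (maximalIdeal R) (e+1) d0 z = 0 := by
      apply th_inj
      rw [th_nat, hg]
    have hz2 : LC.map (maximalIdeal R) (e+1) d0.rangeRestrict z = 0 := by
      obtain ⟨w, hw⟩ := LC.ex1 (maximalIdeal R) _ _ hi he hs
        (LC.map (maximalIdeal R) (e+1) d0.rangeRestrict z) (by rw [← LC.map_comp, hfac, hz])
      rw [← hw, Subsingleton.elim w 0, _root_.map_zero]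
    obtain ⟨y, hy⟩ := LC.ex2 (maximalIdeal R) (LinearMap.ker d0.rangeRestrict).subtype
      d0.rangeRestrict Subtype.val_injective (LinearMap.exact_subtype_ker_map _)
      (LinearMap.surjective_rangeRestrict _) z hz2
    let k : P2 →ₗ[R] LinearMap.ker d0.rangeRestrict := LinearMap.codRestrict _ d1 (fun x => by
      rw [LinearMap.mem_ker]
      exact Subtype.ext (h01.apply_apply_eq_zero x))
    have hk : Function.Surjective k := by
      rintro ⟨x, hx⟩
      obtain ⟨y, rfl⟩ := (h01 x).1 (congrArg Subtype.val hx)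
      exact ⟨y, rfl⟩
    obtain ⟨x, rfl⟩ := lc_right hR k hk y
    refine ⟨th (e+1) P2 x, ?_⟩
    rw [← th_nat, ← hy, ← LC.map_comp]; rfl
  · intro hS
    have := lc_proj h (P := P0) e (by omega)
    refine ⟨fun a b => ?_⟩
    suffices H : ∀ a : LC (maximalIdeal R) (P0 ⧸ LinearMap.range d0) e, a = 0 by rw [H a, H b]
    intro w
    have hw : LC.delta (maximalIdeal R) _ _ hi he hs e w = 0 := by
      obtain ⟨z, hz⟩ := lc_right hR d0.rangeRestrict (LinearMap.surjective_rangeRestrict _)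
        (LC.delta (maximalIdeal R) _ _ hi he hs e w)
      have hz0 : LC.map (maximalIdeal R) (e+1) d0 z = 0 := by
        have := LC.map_delta (maximalIdeal R) _ _ hi he hs w
        rw [← hz, ← LC.map_comp, hfac] at this
        exact this
      obtain ⟨g, hg⟩ := hS (th (e+1) P1 z) (by
        rw [← th_nat, hz0]
        ext φ
        rw [th_apply, _root_.map_zero]; rfl)
      obtain ⟨x, rfl⟩ := th_surj (e+1) g
      have hx : LC.map (maximalIdeal R) (e+1) d1 x = z := by
        rw [← sub_eq_zero]
        apply th_inj
        ext φ
        have := LinearMap.congr_fun hg φ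
        rw [← th_nat] at this
        rw [th_apply, _root_.map_sub, ← th_apply, ← th_apply, this, sub_self]; rfl
      rw [← hz, ← hx, ← LC.map_comp]
      have : d0.rangeRestrict ∘ₗ d1 = 0 := by
        ext x
        exact h01.apply_apply_eq_zero x
      rw [this, LC.map_zero]
    obtain ⟨y, rfl⟩ := LC.ex3 (maximalIdeal R) _ _ hi he hs w hw
    rw [Subsingleton.elim y 0, _root_.map_zero]

theorem key_iff {e : ℕ} (hR : ringKrullDim R ≤ ((e+1 : ℕ) : WithBot ℕ∞)) (h : CMQ (e+1) (⊥ : Ideal R))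
    (d1 : P2 →ₗ[R] P1) (d0 : P1 →ₗ[R] P0) (h01 : Function.Exact d1 d0) (hT : HU (R := R) (TT d0)) :
    EZ R 1 (P0 ⧸ LinearMap.range d0) R ↔
      Subsingleton (LC (maximalIdeal R) (P0 ⧸ LinearMap.range d0) e) := by
  rw [ez_iff d1 d0 h01, lc_iff hR h d1 d0 h01]
  constructor
  · intro hex
    exact SS.of_exact h d1 d0 hex (HU.step d1 d0 hex hT)
  · intro hS
    exact SS.exact h d1 d0 (fun x => h01.apply_apply_eq_zero x) hT hS
end

end PartE

open CategoryTheory Abelian Limits Opposite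
section PartF
open IsLocalRing
set_option linter.unusedSectionVars false
variable {R : Type u} [CommRing R] [IsNoetherianRing R] [IsLocalRing R]
variable {M : Type u} [AddCommGroup M] [Module R M]

theorem CMQ.of {d : ℕ} (hdim : ringKrullDim R ≤ (d : WithBot ℕ∞)) (hCM : (d : ℕ∞) ≤ rdepth R) :
    CMQ d (⊥ : Ideal R) where
  le := bot_le
  dim := by
    rw [ringKrullDim_eq_of_ringEquiv (RingEquiv.quotientBot R)]
    exact hdim
  ext j hj := by
    refine EZ.iso' (be R) ((extM_iff _ _ _).1 ?_)
    by_contra hcon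
    have : rdepth R ≤ (j : ℕ∞) := sInf_le ⟨j, rfl, hcon⟩
    have := hCM.trans this
    have := Nat.cast_le.1 this
    omega

/-- syzygy cokernels -/
abbrev CC (F : MinRes R M) (k : ℕ) : Type u := (F.P k) ⧸ LinearMap.range (F.d k)

theorem cc_ses (F : MinRes R M) (k : ℕ) : ∃ f : CC F (k+1) →ₗ[R] F.P k, Function.Injective f ∧
    Function.Exact f (LinearMap.range (F.d k)).mkQ := by
  refine ⟨Submodule.liftQ _ (F.d k) (F.exact k).le, ?_, ?_⟩
  · rw [← LinearMap.ker_eq_bot, Submodule.ker_liftQ_eq_bot _ _ _ (F.exact k).ge]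
  · rw [LinearMap.exact_iff, Submodule.ker_mkQ, Submodule.range_liftQ]

theorem cc0 (F : MinRes R M) : Nonempty (CC F 0 ≃ₗ[R] M) :=
  ⟨Submodule.quotEquivOfEq _ _ F.exact0 ≪≫ₗ F.ε.quotKerEquivOfSurjective F.surj⟩

theorem cc_ez (F : MinRes R M) (k : ℕ) : ∀ i, EZ R (i+1) (CC F k) R ↔ EZ R (i+1+k) (CC F 0) R := by
  induction k with
  | zero => intro i; rfl
  | succ k ih =>
    intro i
    obtain ⟨f, hf, hfg⟩ := cc_ses F k
    have := F.projective k
    have hs := Submodule.mkQ_surjective (LinearMap.range (F.d k))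
    have : EZ R (i+1) (CC F (k+1)) R ↔ EZ R (i+1+1) (CC F k) R :=
      ⟨fun h => EZ.contra3 _ _ hf hfg hs h (EZ.proj _),
        fun h => EZ.contra1 _ _ hf hfg hs (EZ.proj _) h⟩
    rw [this, ih (i+1)]
    have e : i + 1 + 1 + k = i + 1 + (k + 1) := by omega
    rw [e]

theorem cc_lc {d : ℕ} (h : CMQ d (⊥ : Ideal R)) (F : MinRes R M) (j k : ℕ) (hjk : j + k < d) :
    Subsingleton (LC (maximalIdeal R) (CC F 0) j) ↔
      Subsingleton (LC (maximalIdeal R) (CC F k) (j + k)) := by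
  induction k with
  | zero => rfl
  | succ k ih =>
    rw [ih (by omega)]
    obtain ⟨f, hf, hfg⟩ := cc_ses F k
    have := F.projective k
    have := F.finite k
    have hs := Submodule.mkQ_surjective (LinearMap.range (F.d k))
    exact ⟨fun h' => LC.sub1 _ _ _ hf hfg hs h' (lc_proj h (j + k + 1) (by omega)),
      fun h' => LC.sub3 _ _ _ hf hfg hs (lc_proj h (j + k) (by omega)) h'⟩

theorem d_exact (F : MinRes R M) (k : ℕ) : Function.Exact (F.d (k+1)) (F.d k) :=
  LinearMap.exact_iff.2 (F.exact k).symm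

theorem hu_T (F : MinRes R M) (hfin : GDim R F.lambdaMod < ⊤) (k : ℕ)
    (hk : ∀ j < k, EZ R (j+1) (CC F 0) R) : HU (R := R) (TT (F.d k)) := by
  have hP := F.projective
  have hF := F.finite
  induction k with
  | zero =>
    refine HU.first (F.d 0) ?_
    obtain ⟨_, ⟨n, rfl, hn⟩, _⟩ := sInf_lt_iff.1 hfin
    exact ⟨n, hull_of n hn⟩
  | succ k ih =>
    refine HU.step (F.d (k+1)) (F.d k) ?_ (ih fun j hj => hk j (by omega))
    rw [← ez_iff _ _ (d_exact F k)]
    refine (cc_ez F k 0).2 ?_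
    have e : 0 + 1 + k = k + 1 := by omega
    rw [e]
    exact hk k (by omega)

theorem main_iff {d : ℕ} (hR : ringKrullDim R ≤ (d : WithBot ℕ∞)) (h : CMQ d (⊥ : Ideal R))
    (F : MinRes R M) (hfin : GDim R F.lambdaMod < ⊤) (k : ℕ) (hkd : k < d)
    (hk : ∀ j < k, EZ R (j+1) M R) :
    EZ R (k+1) M R ↔ Subsingleton (LC (maximalIdeal R) M (d - (k+1))) := by
  obtain ⟨e0⟩ := cc0 F
  obtain ⟨e, rfl⟩ : ∃ e, d = e + 1 := ⟨d - 1, by omega⟩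
  have hP := F.projective
  have hF := F.finite
  have h1 := key_iff hR h _ _ (d_exact F k) (hu_T F hfin k fun j hj => EZ.iso e0.symm (hk j hj))
  have h2 := cc_ez F k 0
  have e1 : 0 + 1 + k = k + 1 := by omega
  rw [e1] at h2
  have h3 := cc_lc h F (e + 1 - (k+1)) k (by omega)
  have e2 : e + 1 - (k + 1) + k = e := by omega
  rw [e2] at h3
  have h4 : EZ R (k+1) M R ↔ EZ R (k+1) (CC F 0) R := ⟨EZ.iso e0.symm, EZ.iso e0⟩
  have h5 : Subsingleton (LC (maximalIdeal R) M (e + 1 - (k+1))) ↔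
      Subsingleton (LC (maximalIdeal R) (CC F 0) (e + 1 - (k+1))) :=
    ⟨LC.sub_iso _ e0.symm, LC.sub_iso _ e0⟩
  rw [h4, h5, h3, ← h2]
  exact h1

end PartF

section Statements

variable (R : Type u) [CommRing R] [IsNoetherianRing R]

theorem stmt14 [IsLocalRing R] (d : ℕ) (hdim : ringKrullDim R = ((d : ℕ∞) : WithBot ℕ∞))
    (hCM : rdepth R = (d : ℕ∞))
    (M : Type u) [AddCommGroup M] [Module R M] [Module.Finite R M]
    (hMdim : ringKrullDim (R ⧸ Module.annihilator R M) = ((d : ℕ∞) : WithBot ℕ∞))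
    (hnotMCM : edepth R (IsLocalRing.maximalIdeal R) M ≠ (d : ℕ∞))
    (F : MinRes R M) (hfin : GDim R F.lambdaMod < ⊤) :
    sSup {m : ℕ∞ | ∃ i : ℕ, m = i ∧ i ≠ d ∧
        ¬ Subsingleton (locCoh R (IsLocalRing.maximalIdeal R) i M)} =
      (d : ℕ∞) - rgr R M := by
  have hR : ringKrullDim R ≤ (d : WithBot ℕ∞) := hdim.le
  have hC : CMQ d (⊥ : Ideal R) := CMQ.of hR hCM.ge
  have main := main_iff (M := M) hR hC F hfin
  have hbig : ∀ i, d < i → Subsingleton (LC (IsLocalRing.maximalIdeal R) M i) :=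
    fun i hi => LC_fg hR M inferInstance i hi
  have small : ∀ r : ℕ, r ≤ d → (∀ j < r, EZ R (j+1) M R) → ∀ i : ℕ, i ≠ d →
      ¬ Subsingleton (LC (IsLocalRing.maximalIdeal R) M i) → i < d - r := by
    intro r hr hj i hid hi
    by_contra hcon
    have hid' : i < d := by
      rcases lt_or_gt_of_ne hid with h | h
      · exact h
      · exact absurd (hbig i h) hi
    have := (main (d - i - 1) (by omega) (fun j hj' => hj j (by omega))).1 (hj _ (by omega))
    have e : d - (d - i - 1 + 1) = i := by omega
    rw [e] at this
    exact hi this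
  by_cases hall : ∀ j < d, EZ R (j+1) M R
  · have h1 : (d : ℕ∞) ≤ rgr R M := by
      refine le_sInf ?_
      rintro _ ⟨k, rfl, hk0, hk⟩
      rw [extM_iff] at hk
      by_contra hcon
      rw [not_le, Nat.cast_lt] at hcon
      obtain ⟨j, rfl⟩ : ∃ j, k = j + 1 := ⟨k - 1, by omega⟩
      exact hk (hall j (by omega))
    rw [tsub_eq_zero_of_le h1]
    refine le_antisymm (sSup_le ?_) bot_le
    rintro _ ⟨i, rfl, hid, hi⟩
    rw [locCoh_LC] at hi
    have := small d le_rfl hall i hid hi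
    omega
  · push Not at hall
    classical
    have hex : ∃ j, j < d ∧ ¬ EZ R (j+1) M R := hall
    obtain ⟨hjd, hj⟩ := Nat.find_spec hex
    have hmin : ∀ j < Nat.find hex, EZ R (j+1) M R := by
      intro j hj'
      by_contra hcon
      exact Nat.find_min hex hj' ⟨by omega, hcon⟩
    generalize Nat.find hex = r at hjd hj hmin
    have h1 : rgr R M = ((r+1 : ℕ) : ℕ∞) := by
      refine le_antisymm (sInf_le ⟨r+1, rfl, by omega, by rw [extM_iff]; exact hj⟩) (le_sInf ?_)
      rintro _ ⟨k, rfl, hk0, hk⟩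
      rw [extM_iff] at hk
      by_contra hcon
      rw [not_le, Nat.cast_lt] at hcon
      obtain ⟨j, rfl⟩ : ∃ j, k = j + 1 := ⟨k - 1, by omega⟩
      exact hk (hmin j (by omega))
    rw [h1, ← ENat.natCast_sub]
    refine le_antisymm (sSup_le ?_) (le_sSup ?_)
    · rintro _ ⟨i, rfl, hid, hi⟩
      rw [locCoh_LC] at hi
      have := small r hjd.le hmin i hid hi
      exact Nat.cast_le.2 (by omega)
    · refine ⟨d - (r+1), rfl, by omega, ?_⟩
      rw [locCoh_LC, ← main r hjd hmin]
      exact hj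

end Statements
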